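/- For every pair of constants 0 < c₁ ≤ c₂ there is C = C(c₁,c₂) > 0, independent of N and L, such that: for all dyadic numbers N, L and every u ∈ 𝒮(ℝ×ℝ²) whose space-time Fourier transform ũ(τ,ξ,η) is supported in { (τ,ξ,η) : N/2 ≤ |(ξ,η)| ≤ 2N, L/2 ≤ |τ − ξ³ − η³| ≤ 2L, and c₁|η| ≤ |ξ| ≤ c₂|η| }, one has ‖u‖_{L⁴_{t,x,y}(ℝ×ℝ²)} ≤ C N^{-1/4} L^{1/2} ‖u‖_{L²_{t,x,y}}. -/

import Mathlib

/-!
The estimate is a Tomas–Stein restriction theorem for the surface `τ = ξ³ + η³`, in dual form.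

Put `g = |u|² u`. By Parseval (`parseval3`), `‖u‖₄⁴ = ∫ conj g · u = ∫ conj ĝ · û`, and since `û`
lives in the `O(L)`-neighbourhood `nbhd` of the surface, Cauchy–Schwarz gives
`‖u‖₄⁴ ≤ ‖u‖₂ (∫_nbhd |ĝ|²)^{1/2}`. It remains to bound `∫_nbhd |ĝ|²` by `N^{-1/2} L ‖g‖²_{4/3}`
(`restriction_nbhd`): because `‖g‖_{4/3} = ‖u‖₄³`, dividing by `‖u‖₄³` gives the claim
(`l4_of_support`).

The neighbourhood is foliated by translates `τ = σ + Φ(ξ, η)` with `|σ| ≲ L`, so a bound uniform in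
`σ` for the integral of `|ĝ|²` over one translate suffices (`restriction`). There `ĝ` is a time
integral of spatial transforms of the slices `g(t, ·)`; squaring it out leaves a double integral over
times `t, s` of the form attached to the frequency-localised propagator at time difference `t - s`.
The kernel of the propagator is bounded by a multiple of `(|t - s| N)⁻¹` (`norm_propKer_le`): it is a
product of two one-dimensional oscillatory integrals with cubic phases, to which van der Corput's
lemma applies because both `|ξ|` and `|η|` are comparable to `N`. This is the only place where
`c₁ |η| ≤ |ξ| ≤ c₂ |η|` enters. Interpolating with Plancherel's theorem (`riesz_thorin_mid`,
`plancherel2`) gives the fixed-time `L^{4/3} → L⁴` bound with constant `(|t - s| N)^{-1/2}`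
(`fixed_time`), and the Hardy–Littlewood–Sobolev inequality in time (`hls`) completes the restriction
estimate.

The transforms `F2` and `F3` use the normalisation `e^{-2πi⟨·,·⟩}` of Mathlib; `ftt_eq_F3` compares
`F3` with the transform in the statement, and the phase `Phi` contains the resulting powers of `2π`.
-/

noncomputable section

open MeasureTheory
open scoped ENNReal

/-- Space-time Fourier transform `ũ(τ,ξ,η)` of a function `u(t,x,y)`. -/
def ftt (w : ℝ → ℝ → ℝ → ℂ) (τ ξ η : ℝ) : ℂ :=
  ∫ t : ℝ, ∫ x : ℝ, ∫ y : ℝ,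
    Complex.exp (-Complex.I * ((t * τ + x * ξ + y * η : ℝ) : ℂ)) * w t x y

/-- L⁴ norm over all of `ℝ × ℝ²`. -/
def l4norm3 (w : ℝ → ℝ → ℝ → ℂ) : ℝ≥0∞ :=
  (∫⁻ v : ℝ × ℝ × ℝ, (‖w v.1 v.2.1 v.2.2‖₊ : ℝ≥0∞) ^ (4 : ℝ)) ^ ((1 : ℝ) / 4)

/-- L² norm over all of `ℝ × ℝ²`. -/
def l2norm3 (w : ℝ → ℝ → ℝ → ℂ) : ℝ≥0∞ :=
  (∫⁻ v : ℝ × ℝ × ℝ, (‖w v.1 v.2.1 v.2.2‖₊ : ℝ≥0∞) ^ (2 : ℝ)) ^ ((1 : ℝ) / 2)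

section Auxiliary

open Set
open scoped NNReal

/-! ### Oscillatory integrals -/

/-- First-derivative test: if the phase is convex with derivative at least `μ`, integrating by parts
against `1 / φ'` costs two boundary terms and the total variation of the monotone function
`1 / φ'`. -/
theorem vdc_first {φ φ' φ'' : ℝ → ℝ} {α β μ : ℝ} (hαβ : α ≤ β) (hμ : 0 < μ)
    (h1 : ∀ x, HasDerivAt φ (φ' x) x) (h2 : ∀ x, HasDerivAt φ' (φ'' x) x)
    (hc : Continuous φ'') (hpos : ∀ x ∈ Icc α β, 0 ≤ φ'' x)
    (hlow : ∀ x ∈ Icc α β, μ ≤ φ' x) :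
    ‖∫ x in α..β, Complex.exp (Complex.I * (φ x : ℂ))‖ ≤ 2 / μ := by
  have hcφ : Continuous φ := continuous_iff_continuousAt.2 fun x => (h1 x).continuousAt
  have hcφ' : Continuous φ' := continuous_iff_continuousAt.2 fun x => (h2 x).continuousAt
  have huI : uIcc α β = Icc α β := uIcc_of_le hαβ
  have hne : ∀ x ∈ Icc α β, φ' x ≠ 0 := fun x hx => (hμ.trans_le (hlow x hx)).ne'
  set e : ℝ → ℂ := fun x => Complex.exp (Complex.I * (φ x : ℂ)) with he
  have hec : Continuous e := by fun_prop
  have hen : ∀ x, ‖e x‖ = 1 := fun x => by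
    simp [he, Complex.norm_exp]
  have hed : ∀ x, HasDerivAt e (e x * (Complex.I * (φ' x : ℂ))) x := fun x =>
    (((h1 x).ofReal_comp).const_mul Complex.I).cexp
  have hinv : ∀ x ∈ Icc α β, HasDerivAt (fun y => (φ' y)⁻¹) (-(φ'' x) / (φ' x) ^ 2) x :=
    fun x hx => (h2 x).inv (hne x hx)
  have hGd : ∀ x ∈ uIcc α β, HasDerivAt (fun y => e y * (((φ' y)⁻¹ : ℝ) : ℂ))
      (e x * (Complex.I * (φ' x : ℂ)) * (((φ' x)⁻¹ : ℝ) : ℂ)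
        + e x * ((-(φ'' x) / (φ' x) ^ 2 : ℝ) : ℂ)) x := by
    intro x hx
    rw [huI] at hx
    exact (hed x).mul ((hinv x hx).ofReal_comp)
  have hci : ContinuousOn (fun x => -(φ'' x) / (φ' x) ^ 2) (Icc α β) := by
    apply ContinuousOn.div (by fun_prop) (by fun_prop)
    intro x hx; exact pow_ne_zero _ (hne x hx)
  have hci' : ContinuousOn (fun x => ((-(φ'' x) / (φ' x) ^ 2 : ℝ) : ℂ)) (Icc α β) :=
    Complex.continuous_ofReal.comp_continuousOn hci
  have hint2 : IntervalIntegrable (fun x => e x * ((-(φ'' x) / (φ' x) ^ 2 : ℝ) : ℂ)) volume α β := by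
    apply ContinuousOn.intervalIntegrable
    rw [huI]
    exact hec.continuousOn.mul hci'
  have hint1 : IntervalIntegrable (fun x => Complex.I * e x) volume α β := by
    apply Continuous.intervalIntegrable; fun_prop
  have hFTC := intervalIntegral.integral_eq_sub_of_hasDerivAt (a := α) (b := β)
    (f := fun y => e y * (((φ' y)⁻¹ : ℝ) : ℂ))
    (f' := fun x => Complex.I * e x + e x * ((-(φ'' x) / (φ' x) ^ 2 : ℝ) : ℂ)) (by
      intro x hx
      have h0 := hne x (huI ▸ hx)
      have h0 : (φ' x : ℂ) ≠ 0 := by exact_mod_cast h0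
      have hE : Complex.I * e x = e x * (Complex.I * (φ' x : ℂ)) * (((φ' x)⁻¹ : ℝ) : ℂ) := by
        push_cast
        field_simp
      rw [hE]
      exact hGd x hx) (hint1.add hint2)
  rw [intervalIntegral.integral_add hint1 hint2, intervalIntegral.integral_const_mul] at hFTC
  have hreal := intervalIntegral.integral_eq_sub_of_hasDerivAt (a := α) (b := β)
    (f := fun y => (φ' y)⁻¹) (f' := fun x => -(φ'' x) / (φ' x) ^ 2)
    (by intro x hx; exact hinv x (huI ▸ hx))
    (ContinuousOn.intervalIntegrable (by rw [huI]; exact hci))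
  have hrem : ‖∫ x in α..β, e x * ((-(φ'' x) / (φ' x) ^ 2 : ℝ) : ℂ)‖ ≤ (φ' α)⁻¹ - (φ' β)⁻¹ := by
    calc _ ≤ ∫ x in α..β, ‖e x * ((-(φ'' x) / (φ' x) ^ 2 : ℝ) : ℂ)‖ :=
          intervalIntegral.norm_integral_le_integral_norm hαβ
      _ = ∫ x in α..β, -(-(φ'' x) / (φ' x) ^ 2) := by
          apply intervalIntegral.integral_congr
          intro x hx
          rw [huI] at hx
          simp only [norm_mul, hen, one_mul, Complex.norm_real, Real.norm_eq_abs]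
          rw [abs_of_nonpos]
          exact div_nonpos_of_nonpos_of_nonneg (by simpa using hpos x hx) (by positivity)
      _ = _ := by
          rw [intervalIntegral.integral_neg, hreal]; ring
  have ha : 0 < φ' α := hμ.trans_le (hlow α (left_mem_Icc.2 hαβ))
  have hb : 0 < φ' β := hμ.trans_le (hlow β (right_mem_Icc.2 hαβ))
  have hnorm : ‖∫ x in α..β, e x‖ = ‖Complex.I * ∫ x in α..β, e x‖ := by simp
  have hE : Complex.I * ∫ x in α..β, e x = e β * (((φ' β)⁻¹ : ℝ) : ℂ) - e α * (((φ' α)⁻¹ : ℝ) : ℂ)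
      - ∫ x in α..β, e x * ((-(φ'' x) / (φ' x) ^ 2 : ℝ) : ℂ) := by
    rw [← hFTC]; ring
  rw [hnorm, hE]
  calc _ ≤ ‖e β * (((φ' β)⁻¹ : ℝ) : ℂ)‖ + ‖e α * (((φ' α)⁻¹ : ℝ) : ℂ)‖
      + ‖∫ x in α..β, e x * ((-(φ'' x) / (φ' x) ^ 2 : ℝ) : ℂ)‖ :=
        (norm_sub_le _ _).trans (by gcongr; exact norm_sub_le _ _)
    _ ≤ (φ' β)⁻¹ + (φ' α)⁻¹ + ((φ' α)⁻¹ - (φ' β)⁻¹) := by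
        gcongr
        · simp [hen, abs_of_pos hb]
        · simp [hen, abs_of_pos ha]
    _ = 2 * (φ' α)⁻¹ := by ring
    _ ≤ 2 / μ := by
        rw [div_eq_mul_inv]
        gcongr
        exact hlow α (left_mem_Icc.2 hαβ)

theorem norm_osc_le (φ : ℝ → ℝ) {α β : ℝ} (h : α ≤ β) :
    ‖∫ x in α..β, Complex.exp (Complex.I * (φ x : ℂ))‖ ≤ β - α := by
  have := intervalIntegral.norm_integral_le_of_norm_le_const (a := α) (b := β) (C := 1)
    (f := fun x => Complex.exp (Complex.I * (φ x : ℂ))) (fun x _ => by simp [Complex.norm_exp])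
  simpa [abs_of_nonneg (sub_nonneg.2 h)] using this

/-- When the phase is nondecreasing from the left endpoint on, an interval of length `1 / √lam` is
estimated trivially and `φ' ≥ √lam` beyond it. -/
theorem vdc_right {φ φ' φ'' : ℝ → ℝ} {α β lam : ℝ} (hαβ : α ≤ β) (hlam : 0 < lam)
    (h1 : ∀ x, HasDerivAt φ (φ' x) x) (h2 : ∀ x, HasDerivAt φ' (φ'' x) x)
    (hc : Continuous φ'') (hlow : ∀ x ∈ Icc α β, lam ≤ φ'' x) (h0 : 0 ≤ φ' α) :
    ‖∫ x in α..β, Complex.exp (Complex.I * (φ x : ℂ))‖ ≤ 3 / √lam := by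
  have hs : 0 < √lam := Real.sqrt_pos.2 hlam
  have hss : √lam * √lam = lam := Real.mul_self_sqrt hlam.le
  set δ := 1 / √lam with hδ
  have hδ0 : 0 < δ := by positivity
  have hcφ : Continuous φ := continuous_iff_continuousAt.2 fun x => (h1 x).continuousAt
  have hcφ' : Continuous φ' := continuous_iff_continuousAt.2 fun x => (h2 x).continuousAt
  by_cases hle : β ≤ α + δ
  · calc _ ≤ β - α := norm_osc_le φ hαβ
      _ ≤ δ := by linarith
      _ ≤ _ := by rw [hδ]; gcongr; norm_num
  push Not at hle
  have hi : ∀ a b, IntervalIntegrable (fun x => Complex.exp (Complex.I * (φ x : ℂ))) volume a b :=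
    fun a b => Continuous.intervalIntegrable (by fun_prop) a b
  rw [← intervalIntegral.integral_add_adjacent_intervals (hi α (α + δ)) (hi (α + δ) β)]
  have hgrow : ∀ x ∈ Icc (α + δ) β, √lam ≤ φ' x := by
    intro x hx
    have hmv := Convex.mul_sub_le_image_sub_of_le_deriv (convex_Icc α β) (f := φ') (C := lam)
      hcφ'.continuousOn (fun y _ => (h2 y).differentiableAt.differentiableWithinAt)
      (fun y hy => by rw [(h2 y).deriv]; exact hlow y (interior_subset hy))
      α (left_mem_Icc.2 hαβ) x ⟨by linarith [hx.1], hx.2⟩ (by linarith [hx.1])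
    have : lam * δ = √lam := by
      rw [hδ]; field_simp; nlinarith
    nlinarith [hx.1]
  have hR := vdc_first hle.le hs h1 h2 hc
    (fun x hx => hlam.le.trans (hlow x ⟨by linarith [hx.1], hx.2⟩)) hgrow
  have hL := norm_osc_le φ (show α ≤ α + δ by linarith)
  calc _ ≤ _ := norm_add_le _ _
    _ ≤ (α + δ - α) + 2 / √lam := by gcongr
    _ = 3 / √lam := by rw [hδ]; ring

theorem vdc_left {φ φ' φ'' : ℝ → ℝ} {α β lam : ℝ} (hαβ : α ≤ β) (hlam : 0 < lam)
    (h1 : ∀ x, HasDerivAt φ (φ' x) x) (h2 : ∀ x, HasDerivAt φ' (φ'' x) x)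
    (hc : Continuous φ'') (hlow : ∀ x ∈ Icc α β, lam ≤ φ'' x) (h0 : φ' β ≤ 0) :
    ‖∫ x in α..β, Complex.exp (Complex.I * (φ x : ℂ))‖ ≤ 3 / √lam := by
  have h := vdc_right (φ := fun x => φ (-x)) (φ' := fun x => -φ' (-x)) (φ'' := fun x => φ'' (-x))
    (α := -β) (β := -α) (by linarith) hlam
    (fun x => by
      simpa [Function.comp_def] using! (h1 (-x)).scomp x (hasDerivAt_neg x))
    (fun x => by
      simpa [Function.comp_def] using! ((h2 (-x)).scomp x (hasDerivAt_neg x)).neg)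
    (by fun_prop) (fun x hx => hlow (-x) ⟨by linarith [hx.2], by linarith [hx.1]⟩)
    (by simpa using h0)
  rwa [intervalIntegral.integral_comp_neg (f := fun x => Complex.exp (Complex.I * (φ x : ℂ))),
    neg_neg, neg_neg] at h

/-- Van der Corput's second-derivative test, by splitting at the critical point of the phase. -/
theorem vdc_second {φ φ' φ'' : ℝ → ℝ} {α β lam : ℝ} (hαβ : α ≤ β) (hlam : 0 < lam)
    (h1 : ∀ x, HasDerivAt φ (φ' x) x) (h2 : ∀ x, HasDerivAt φ' (φ'' x) x)
    (hc : Continuous φ'') (hlow : ∀ x ∈ Icc α β, lam ≤ φ'' x) :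
    ‖∫ x in α..β, Complex.exp (Complex.I * (φ x : ℂ))‖ ≤ 6 / √lam := by
  have hs : 0 < √lam := Real.sqrt_pos.2 hlam
  have h36 : 3 / √lam ≤ 6 / √lam := by gcongr; norm_num
  have hcφ : Continuous φ := continuous_iff_continuousAt.2 fun x => (h1 x).continuousAt
  have hcφ' : Continuous φ' := continuous_iff_continuousAt.2 fun x => (h2 x).continuousAt
  rcases le_total 0 (φ' α) with h0 | h0
  · exact (vdc_right hαβ hlam h1 h2 hc hlow h0).trans h36
  rcases le_total (φ' β) 0 with h0' | h0'
  · exact (vdc_left hαβ hlam h1 h2 hc hlow h0').trans h36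
  obtain ⟨x₀, hx₀, hz⟩ := intermediate_value_Icc hαβ hcφ'.continuousOn ⟨h0, h0'⟩
  have hi : ∀ a b, IntervalIntegrable (fun x => Complex.exp (Complex.I * (φ x : ℂ))) volume a b :=
    fun a b => Continuous.intervalIntegrable (by fun_prop) a b
  rw [← intervalIntegral.integral_add_adjacent_intervals (hi α x₀) (hi x₀ β)]
  calc _ ≤ _ := norm_add_le _ _
    _ ≤ 3 / √lam + 3 / √lam := by
      gcongr
      · exact vdc_left hx₀.1 hlam h1 h2 hc (fun x hx => hlow x ⟨hx.1, hx.2.trans hx₀.2⟩) hz.le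
      · exact vdc_right hx₀.2 hlam h1 h2 hc (fun x hx => hlow x ⟨hx₀.1.trans hx.1, hx.2⟩) hz.ge
    _ = _ := by ring

/-- The bound depends neither on the linear coefficient `q` nor on the right endpoint. -/
theorem vdc_cubic {p : ℝ} (q : ℝ) {α β : ℝ} (hα : 0 < α) (hαβ : α ≤ β) (hp : p ≠ 0) :
    ‖∫ x in α..β, Complex.exp (Complex.I * ((p * x ^ 3 + q * x : ℝ) : ℂ))‖
      ≤ 6 / √(6 * |p| * α) := by
  have key : ∀ p q : ℝ, 0 < p →
      ‖∫ x in α..β, Complex.exp (Complex.I * ((p * x ^ 3 + q * x : ℝ) : ℂ))‖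
      ≤ 6 / √(6 * p * α) := by
    intro p q hp
    apply vdc_second (φ := fun x => p * x ^ 3 + q * x) (φ' := fun x => 3 * p * x ^ 2 + q)
      (φ'' := fun x => 6 * p * x) hαβ (by positivity)
    · intro x
      have := (((hasDerivAt_id x).pow 3).const_mul p).add ((hasDerivAt_id x).const_mul q)
      convert! this using 1
      simp; ring
    · intro x
      have := (((hasDerivAt_id x).pow 2).const_mul (3 * p)).add_const q
      convert! this using 1
      simp; ring
    · fun_prop
    · intro x hx
      have := hx.1
      gcongr
  rcases lt_or_gt_of_ne hp with h | h
  · rw [abs_of_neg h]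
    have := key (-p) (-q) (by linarith)
    rw [intervalIntegral.integral_of_le hαβ, ← RCLike.norm_conj, ← integral_conj] at this
    rw [intervalIntegral.integral_of_le hαβ]
    convert! this using 4
    · rw [← Complex.exp_conj]
      congr 1
      simp [-Complex.ofReal_add, -Complex.ofReal_mul, -Complex.ofReal_pow]
      push_cast; ring
  · rw [abs_of_pos h]; exact key p q h

/-- The set of `ξ` with `m ≤ |ξ| ≤ b`. -/
def band (m b : ℝ) : Set ℝ := Icc m b ∪ Icc (-b) (-m)

theorem measurableSet_band (m b : ℝ) : MeasurableSet (band m b) :=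
  measurableSet_Icc.union measurableSet_Icc

/-- Decay of the one-dimensional Airy-type kernel localised to frequencies `m ≤ |ξ| ≤ b`. -/
theorem band_kernel_le {m b p : ℝ} (q : ℝ) (hm : 0 < m) (hmb : m ≤ b) (hp : p ≠ 0) :
    ‖∫ x in band m b, Complex.exp (Complex.I * ((p * x ^ 3 + q * x : ℝ) : ℂ))‖
      ≤ 12 / √(6 * |p| * m) := by
  have hcont : Continuous fun x : ℝ => Complex.exp (Complex.I * ((p * x ^ 3 + q * x : ℝ) : ℂ)) := by
    fun_prop
  have hdisj : Disjoint (Icc m b) (Icc (-b) (-m)) := by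
    rw [Set.disjoint_left]; intro x hx hx'; linarith [hx.1, hx'.2]
  rw [band, setIntegral_union hdisj measurableSet_Icc
    (hcont.continuousOn.integrableOn_Icc) (hcont.continuousOn.integrableOn_Icc),
    integral_Icc_eq_integral_Ioc, integral_Icc_eq_integral_Ioc,
    ← intervalIntegral.integral_of_le hmb, ← intervalIntegral.integral_of_le (by linarith)]
  have h1 := vdc_cubic q hm hmb hp
  have h2 := vdc_cubic (-q) hm hmb (neg_ne_zero.2 hp)
  rw [abs_neg] at h2
  have h3 := intervalIntegral.integral_comp_neg (a := m) (b := b)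
    (f := fun x => Complex.exp (Complex.I * ((p * x ^ 3 + q * x : ℝ) : ℂ)))
  rw [← h3]
  calc _ ≤ _ := norm_add_le _ _
    _ ≤ 6 / √(6 * |p| * m) + 6 / √(6 * |p| * m) := by
      gcongr
      convert! h2 using 5
      push_cast; ring_nf
    _ = _ := by ring

/-! ### The Hardy–Littlewood–Sobolev inequality on the line -/

theorem lintegral_abs_comp {f : ℝ → ℝ≥0∞} (hf : Measurable f) :
    ∫⁻ r, f |r| = 2 * ∫⁻ r in Ioi 0, f r := by
  have h1 : ∫⁻ r in Ioi (0 : ℝ), f |r| = ∫⁻ r in Ioi (0 : ℝ), f r :=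
    setLIntegral_congr_fun measurableSet_Ioi fun x hx => by simp only [abs_of_pos (mem_Ioi.1 hx)]
  have h2 : ∫⁻ r in Iic (0 : ℝ), f |r| = ∫⁻ r in Ioi (0 : ℝ), f r := by
    rw [setLIntegral_congr Iio_ae_eq_Iic.symm, ← h1]
    have := (Measure.measurePreserving_neg (volume : Measure ℝ)).setLIntegral_comp_preimage
      (s := Ioi 0) measurableSet_Ioi (f := fun r => f |r|) (hf.comp measurable_norm)
    simp only [abs_neg] at this
    rw [← this]
    congr 2
    ext x; simp
  rw [← lintegral_add_compl (fun r => f |r|) (measurableSet_Ioi (a := (0 : ℝ))), compl_Ioi, h1, h2,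
    two_mul]

/-- The kernel `|t - s|^{-1/2}` is integrable near the diagonal. -/
theorem lintegral_kernel_near {R : ℝ} (hR : 0 < R) (t : ℝ) :
    ∫⁻ s in {s | |t - s| ≤ R}, ENNReal.ofReal (|t - s| ^ (-(1:ℝ)/2)) ≤
      ENNReal.ofReal (4 * R ^ ((1:ℝ)/2)) := by
  have hm : MeasurableSet {s : ℝ | |t - s| ≤ R} := measurableSet_le (by fun_prop) (by fun_prop)
  set f : ℝ → ℝ≥0∞ := (Iic R).indicator fun r => ENNReal.ofReal (r ^ (-(1:ℝ)/2)) with hf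
  have hfm : Measurable f := Measurable.indicator (by fun_prop) measurableSet_Iic
  have e1 : ∫⁻ s in {s | |t - s| ≤ R}, ENNReal.ofReal (|t - s| ^ (-(1:ℝ)/2)) = ∫⁻ s, f |t - s| := by
    rw [← lintegral_indicator hm]
    rfl
  rw [e1, lintegral_sub_left_eq_self (fun r => f |r|) t, lintegral_abs_comp hfm, hf,
    setLIntegral_indicator measurableSet_Iic, Iic_inter_Ioi]
  rw [← ofReal_integral_eq_lintegral_ofReal]
  · rw [← intervalIntegral.integral_of_le hR.le, integral_rpow (by norm_num)]
    rw [← ENNReal.ofReal_ofNat, ← ENNReal.ofReal_mul (by norm_num)]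
    apply ENNReal.ofReal_le_ofReal
    rw [Real.zero_rpow (by norm_num)]
    norm_num
    linarith
  · rw [← IntegrableOn, ← intervalIntegrable_iff_integrableOn_Ioc_of_le hR.le]
    exact intervalIntegral.intervalIntegrable_rpow' (by norm_num)
  · filter_upwards [ae_restrict_mem measurableSet_Ioc] with x hx
    exact Real.rpow_nonneg hx.1.le _

/-- The kernel `|t - s|^{-1/2}` is in `L⁴` away from the diagonal; `4` is dual to `4/3`. -/
theorem lintegral_kernel_far {R : ℝ} (hR : 0 < R) (t : ℝ) :
    ∫⁻ s in {s | |t - s| ≤ R}ᶜ, ENNReal.ofReal (|t - s| ^ (-(1:ℝ)/2)) ^ (4 : ℝ) ≤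
      ENNReal.ofReal (2 / R) := by
  have hm : MeasurableSet {s : ℝ | |t - s| ≤ R}ᶜ :=
    (measurableSet_le (by fun_prop) (by fun_prop)).compl
  set f : ℝ → ℝ≥0∞ := (Ioi R).indicator fun r => ENNReal.ofReal (r ^ (-(1:ℝ)/2)) ^ (4 : ℝ) with hf
  have hfm : Measurable f := Measurable.indicator (by fun_prop) measurableSet_Ioi
  have e1 : ∫⁻ s in {s | |t - s| ≤ R}ᶜ, ENNReal.ofReal (|t - s| ^ (-(1:ℝ)/2)) ^ (4 : ℝ)
      = ∫⁻ s, f |t - s| := by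
    rw [← lintegral_indicator hm]
    congr 1; ext s
    simp [hf, indicator]
  rw [e1, lintegral_sub_left_eq_self (fun r => f |r|) t, lintegral_abs_comp hfm, hf,
    setLIntegral_indicator measurableSet_Ioi]
  have e2 : Ioi R ∩ Ioi 0 = Ioi R := by
    ext x; simp only [mem_inter_iff, mem_Ioi, and_iff_left_iff_imp]; intro h; linarith
  have e3 : ∫⁻ r in Ioi R, ENNReal.ofReal (r ^ (-(1:ℝ)/2)) ^ (4 : ℝ) =
      ∫⁻ r in Ioi R, ENNReal.ofReal (r ^ (-2 : ℝ)) :=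
    setLIntegral_congr_fun measurableSet_Ioi fun x hx => by
      have hx0 : 0 ≤ x := hR.le.trans (mem_Ioi.1 hx).le
      rw [ENNReal.ofReal_rpow_of_nonneg (Real.rpow_nonneg hx0 _) (by norm_num), ← Real.rpow_mul hx0]
      norm_num
  rw [e2, e3, ← ofReal_integral_eq_lintegral_ofReal]
  · rw [integral_Ioi_rpow_of_lt (by norm_num) hR]
    rw [← ENNReal.ofReal_ofNat, ← ENNReal.ofReal_mul (by norm_num)]
    apply ENNReal.ofReal_le_ofReal
    norm_num
    rw [Real.rpow_neg_one]
    rfl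
  · exact integrableOn_Ioi_rpow_of_lt (by norm_num) hR
  · filter_upwards [ae_restrict_mem measurableSet_Ioi] with x hx
    exact Real.rpow_nonneg (hR.le.trans (mem_Ioi.1 hx).le) _

/-- For fixed `t`, the minimum is bounded by `ψ t` on `|t - s| ≤ R`, and by `ψ s` together with
Hölder's inequality outside. -/
theorem hls_inner {ψ : ℝ → ℝ≥0∞} (hψ : Measurable ψ) {R : ℝ} (hR : 0 < R) (t : ℝ) :
    ∫⁻ s, min (ψ t) (ψ s) * ENNReal.ofReal (|t - s| ^ (-(1:ℝ)/2)) ≤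
      ψ t * ENNReal.ofReal (4 * R ^ ((1:ℝ)/2)) +
        (∫⁻ s, ψ s ^ ((4:ℝ)/3)) ^ ((3:ℝ)/4) * ENNReal.ofReal (2 / R) ^ ((1:ℝ)/4) := by
  have hm : MeasurableSet {s : ℝ | |t - s| ≤ R} := measurableSet_le (by fun_prop) (by fun_prop)
  rw [← lintegral_add_compl _ hm]
  gcongr
  · calc _ ≤ ∫⁻ s in {s | |t - s| ≤ R}, ψ t * ENNReal.ofReal (|t - s| ^ (-(1:ℝ)/2)) := by
          gcongr; exact min_le_left _ _
      _ = ψ t * ∫⁻ s in {s | |t - s| ≤ R}, ENNReal.ofReal (|t - s| ^ (-(1:ℝ)/2)) := by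
          rw [lintegral_const_mul _ (by fun_prop)]
      _ ≤ _ := by gcongr; exact lintegral_kernel_near hR t
  · calc _ ≤ ∫⁻ s in {s | |t - s| ≤ R}ᶜ, ψ s * ENNReal.ofReal (|t - s| ^ (-(1:ℝ)/2)) := by
          gcongr; exact min_le_right _ _
      _ ≤ (∫⁻ s in {s | |t - s| ≤ R}ᶜ, ψ s ^ ((4:ℝ)/3)) ^ (1 / ((4:ℝ)/3)) *
          (∫⁻ s in {s | |t - s| ≤ R}ᶜ, ENNReal.ofReal (|t - s| ^ (-(1:ℝ)/2)) ^ (4 : ℝ)) ^ (1/(4:ℝ)) := by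
          apply ENNReal.lintegral_mul_le_Lp_mul_Lq
          · rw [Real.holderConjugate_iff]; norm_num
          · exact hψ.aemeasurable
          · fun_prop
      _ ≤ _ := by
          rw [show (1 / ((4:ℝ)/3)) = 3/4 by norm_num]
          gcongr
          · exact Measure.restrict_le_self
          · exact lintegral_kernel_far hR t

/-- The Hardy–Littlewood–Sobolev inequality on the line for the kernel `|t - s|^{-1/2}` at the
exponent `4/3`. Since `ψ t * ψ s = max * min`, the form is symmetrised to
`ψ t * min (ψ t) (ψ s)`, for which the radius `R` in `hls_inner` may be chosen pointwise in `t`. -/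
theorem hls {ψ : ℝ → ℝ≥0∞} (hψ : Measurable ψ) (hfin : ∀ t, ψ t ≠ ∞) :
    ∫⁻ t, ∫⁻ s, ψ t * ψ s * ENNReal.ofReal (|t - s| ^ (-(1:ℝ)/2)) ≤
      12 * (∫⁻ s, ψ s ^ ((4:ℝ)/3)) ^ ((3:ℝ)/2) := by
  set I := ∫⁻ s, ψ s ^ ((4:ℝ)/3) with hI
  rcases eq_or_ne I 0 with h0 | h0
  · have hz : ψ =ᵐ[volume] 0 := by
      rw [hI, lintegral_eq_zero_iff (by fun_prop)] at h0
      filter_upwards [h0] with x hx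
      have h43 : ¬ ((4:ℝ)/3 < 0) := by norm_num
      simpa [h43] using hx
    have : ∫⁻ t, ∫⁻ s, ψ t * ψ s * ENNReal.ofReal (|t - s| ^ (-(1:ℝ)/2)) = 0 := by
      rw [← lintegral_zero (μ := (volume : Measure ℝ))]
      apply lintegral_congr_ae
      filter_upwards [hz] with t ht
      simp [ht]
    rw [this]; exact zero_le
  rcases eq_or_ne I ∞ with h1 | h1
  · rw [h1, ENNReal.top_rpow_of_pos (by norm_num)]
    simp
  have hin : ∀ t, ψ t * ∫⁻ s, min (ψ t) (ψ s) * ENNReal.ofReal (|t - s| ^ (-(1:ℝ)/2)) ≤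
      6 * I ^ ((1:ℝ)/2) * ψ t ^ ((4:ℝ)/3) := by
    intro t
    rcases eq_or_ne (ψ t) 0 with ht | ht
    · simp [ht]
    set a := (ψ t).toReal with ha
    have ha0 : 0 < a := ENNReal.toReal_pos ht (hfin t)
    have hψa : ψ t = ENNReal.ofReal a := (ENNReal.ofReal_toReal (hfin t)).symm
    set i := I.toReal with hi
    have hi0 : 0 < i := ENNReal.toReal_pos h0 h1
    have hIi : I = ENNReal.ofReal i := (ENNReal.ofReal_toReal h1).symm
    -- the radius at which the two terms of `hls_inner` have the same size
    have hR : 0 < i * a ^ (-(4:ℝ)/3) := by positivity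
    have := hls_inner hψ hR t
    rw [← hI] at this
    refine (mul_le_mul_right this _).trans ?_
    rw [hψa, hIi, ENNReal.ofReal_rpow_of_pos hi0, ENNReal.ofReal_rpow_of_pos (by positivity),
      ENNReal.ofReal_rpow_of_pos hi0, ENNReal.ofReal_rpow_of_pos ha0, ← ENNReal.ofReal_ofNat,
      ← ENNReal.ofReal_mul (by positivity), ← ENNReal.ofReal_mul (by positivity),
      ← ENNReal.ofReal_add (by positivity) (by positivity),
      ← ENNReal.ofReal_mul (by positivity), ← ENNReal.ofReal_mul (by positivity),
      ← ENNReal.ofReal_mul (by positivity)]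
    apply ENNReal.ofReal_le_ofReal
    have e1 : (i * a ^ (-(4:ℝ)/3)) ^ ((1:ℝ)/2) = i ^ ((1:ℝ)/2) * a ^ (-(2:ℝ)/3) := by
      rw [Real.mul_rpow hi0.le (by positivity), ← Real.rpow_mul ha0.le]; norm_num
    have e2 : (2 / (i * a ^ (-(4:ℝ)/3))) ^ ((1:ℝ)/4) =
        2 ^ ((1:ℝ)/4) * (i ^ (-(1:ℝ)/4) * a ^ ((1:ℝ)/3)) := by
      rw [div_eq_mul_inv, Real.mul_rpow (by norm_num) (by positivity), mul_inv,
        Real.mul_rpow (by positivity) (by positivity), ← Real.rpow_neg ha0.le,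
        ← Real.rpow_neg_one i, ← Real.rpow_mul hi0.le, ← Real.rpow_mul ha0.le]
      norm_num
    have e3 : a * (a * a ^ (-(2:ℝ)/3)) = a ^ ((4:ℝ)/3) := by
      nth_rewrite 1 2 [← Real.rpow_one a]
      rw [← Real.rpow_add ha0, ← Real.rpow_add ha0]; norm_num
    have e4 : a * a ^ ((1:ℝ)/3) = a ^ ((4:ℝ)/3) := by
      nth_rewrite 1 [← Real.rpow_one a]
      rw [← Real.rpow_add ha0]; norm_num
    have e5 : i ^ ((3:ℝ)/4) * i ^ (-(1:ℝ)/4) = i ^ ((1:ℝ)/2) := by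
      rw [← Real.rpow_add hi0]; norm_num
    have e6 : (2:ℝ) ^ ((1:ℝ)/4) ≤ 2 := by
      calc (2:ℝ) ^ ((1:ℝ)/4) ≤ 2 ^ (1:ℝ) := Real.rpow_le_rpow_of_exponent_le (by norm_num) (by norm_num)
        _ = 2 := by simp
    rw [e1, e2]
    calc _ = 4 * i ^ ((1:ℝ)/2) * (a * (a * a ^ (-(2:ℝ)/3))) +
          2 ^ ((1:ℝ)/4) * (i ^ ((3:ℝ)/4) * i ^ (-(1:ℝ)/4)) * (a * a ^ ((1:ℝ)/3)) := by ring
      _ ≤ 4 * i ^ ((1:ℝ)/2) * a ^ ((4:ℝ)/3) + 2 * i ^ ((1:ℝ)/2) * a ^ ((4:ℝ)/3) := by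
          rw [e3, e4, e5]; gcongr
      _ = _ := by ring
  have hk : Measurable fun p : ℝ × ℝ => ENNReal.ofReal (|p.1 - p.2| ^ (-(1:ℝ)/2)) := by fun_prop
  set G : ℝ → ℝ → ℝ≥0∞ := fun t s =>
    ψ t * (min (ψ t) (ψ s) * ENNReal.ofReal (|t - s| ^ (-(1:ℝ)/2))) with hG
  have hGm : Measurable (Function.uncurry G) := by
    simp only [hG, Function.uncurry_def]; fun_prop
  have hsum : ∫⁻ t, ∫⁻ s, G t s ≤ 6 * I ^ ((3:ℝ)/2) := by
    calc _ = ∫⁻ t, ψ t * ∫⁻ s, min (ψ t) (ψ s) * ENNReal.ofReal (|t - s| ^ (-(1:ℝ)/2)) := by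
          apply lintegral_congr; intro t
          rw [lintegral_const_mul _ (by fun_prop)]
      _ ≤ ∫⁻ t, 6 * I ^ ((1:ℝ)/2) * ψ t ^ ((4:ℝ)/3) := lintegral_mono hin
      _ = 6 * I ^ ((1:ℝ)/2) * I := by rw [lintegral_const_mul _ (by fun_prop)]
      _ = 6 * I ^ ((3:ℝ)/2) := by
          nth_rewrite 2 [← ENNReal.rpow_one I]
          rw [mul_assoc, ← ENNReal.rpow_add _ _ h0 h1]; norm_num
  calc _ ≤ ∫⁻ t, ∫⁻ s, (G t s + G s t) := by
        apply lintegral_mono; intro t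
        apply lintegral_mono; intro s
        simp only [hG]
        rw [abs_sub_comm s t, min_comm (ψ s) (ψ t), ← add_mul]
        rw [← mul_assoc]
        gcongr ?_ * _
        rw [add_mul]
        rcases le_total (ψ t) (ψ s) with h | h
        · rw [min_eq_left h]
          exact le_add_left (by rw [mul_comm])
        · rw [min_eq_right h]
          exact le_add_right le_rfl
    _ = ∫⁻ t, ((∫⁻ s, G t s) + ∫⁻ s, G s t) := by
        apply lintegral_congr; intro t
        rw [lintegral_add_left]
        exact hGm.comp measurable_prodMk_left
    _ = (∫⁻ t, ∫⁻ s, G t s) + ∫⁻ t, ∫⁻ s, G s t := by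
        rw [lintegral_add_left]
        exact hGm.lintegral_prod_right'
    _ = (∫⁻ t, ∫⁻ s, G t s) + ∫⁻ t, ∫⁻ s, G t s := by
        congr 1
        exact lintegral_lintegral_swap (f := fun t s => G s t) (hGm.comp measurable_swap).aemeasurable
    _ ≤ 6 * I ^ ((3:ℝ)/2) + 6 * I ^ ((3:ℝ)/2) := by gcongr
    _ = _ := by rw [← add_mul]; norm_num

/-! ### Interpolation -/

theorem rpow_le_of_half_le {a M q : ℝ} (ha : 0 ≤ a) (haM : a ≤ M) (hq : 1 / 2 < q) :
    a ^ q ≤ M ^ (q - 1/2) * a ^ ((1:ℝ)/2) := by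
  have h : a ^ q = a ^ (q - 1/2) * a ^ ((1:ℝ)/2) := by
    rw [← Real.rpow_add_of_nonneg ha (by linarith) (by norm_num)]; congr 1; ring
  rw [h]
  gcongr

theorem integrable_rpow_of_half {Ω : Type*} [MeasurableSpace Ω] {μ : Measure Ω} {a : Ω → ℝ} {M q : ℝ}
    (hm : Measurable a) (ha0 : ∀ x, 0 ≤ a x) (haM : ∀ x, a x ≤ M)
    (hintg : Integrable (fun x => a x ^ ((1:ℝ)/2)) μ) (hq : 1 / 2 < q) :
    Integrable (fun x => a x ^ q) μ := by
  refine (hintg.const_mul (M ^ (q - 1/2))).mono' (hm.pow_const q).aestronglyMeasurable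
    (Filter.Eventually.of_forall fun x => ?_)
  rw [Real.norm_of_nonneg (Real.rpow_nonneg (ha0 x) _)]
  exact rpow_le_of_half_le (ha0 x) (haM x) hq

/-- Domination of the derivative in `w` of `a ^ w`, uniform over a vertical strip to the right of
`1/2`; the logarithm is absorbed by `a ^ ε` and `a ^ (-ε)`. -/
theorem norm_cpow_mul_log_le {a M ε R : ℝ} {w : ℂ} (ha : 0 ≤ a) (haM : a ≤ M) (hM : 1 ≤ M)
    (hε : 0 < ε) (h1 : 1 / 2 + ε ≤ w.re) (h2 : w.re + ε ≤ R) :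
    ‖(a : ℂ) ^ w * Complex.log (a : ℂ)‖ ≤ 2 / ε * M ^ R * a ^ ((1:ℝ)/2) := by
  rcases ha.eq_or_lt with rfl | hpos
  · simp
  rw [norm_mul, Complex.norm_cpow_eq_rpow_re_of_pos hpos, ← Complex.ofReal_log ha, Complex.norm_real,
    Real.norm_eq_abs]
  have hlog : |Real.log a| ≤ a ^ ε / ε + a ^ (-ε) / ε := by
    have l1 := Real.log_le_rpow_div ha hε
    have l2 := Real.log_le_rpow_div (inv_nonneg.2 ha) hε
    rw [Real.log_inv, Real.inv_rpow ha, ← Real.rpow_neg ha] at l2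
    have : 0 ≤ a ^ ε / ε := by positivity
    have : 0 ≤ a ^ (-ε) / ε := by positivity
    rw [abs_le]; constructor <;> linarith
  have e1 : a ^ w.re * a ^ ε ≤ M ^ R * a ^ ((1:ℝ)/2) := by
    rw [← Real.rpow_add hpos]
    refine (rpow_le_of_half_le ha haM (by linarith)).trans ?_
    gcongr
    linarith
  have e2 : a ^ w.re * a ^ (-ε) ≤ M ^ R * a ^ ((1:ℝ)/2) := by
    rw [← Real.rpow_add hpos]
    have h : a ^ (w.re + -ε) = a ^ (w.re - ε - 1/2) * a ^ ((1:ℝ)/2) := by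
      rw [← Real.rpow_add hpos]; congr 1; ring
    rw [h]
    gcongr
    calc a ^ (w.re - ε - 1/2) ≤ M ^ (w.re - ε - 1/2) := by gcongr; linarith
      _ ≤ M ^ R := by gcongr; linarith
  calc _ ≤ a ^ w.re * (a ^ ε / ε + a ^ (-ε) / ε) := by gcongr
    _ = (a ^ w.re * a ^ ε + a ^ w.re * a ^ (-ε)) / ε := by ring
    _ ≤ (M ^ R * a ^ ((1:ℝ)/2) + M ^ R * a ^ ((1:ℝ)/2)) / ε := by gcongr
    _ = _ := by ring

/-- Holomorphy of the family of integrals used for the three lines theorem. -/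
theorem differentiableAt_integral_cpow {Ω : Type*} [MeasurableSpace Ω] {μ : Measure Ω}
    {a : Ω → ℝ} {c : Ω → ℂ} {M C : ℝ} (hm : Measurable a) (ha0 : ∀ x, 0 ≤ a x) (haM : ∀ x, a x ≤ M)
    (hintg : Integrable (fun x => a x ^ ((1:ℝ)/2)) μ) (hc : Measurable c) (hcC : ∀ x, ‖c x‖ ≤ C)
    {w₀ : ℂ} (hw : 1 / 2 < w₀.re) :
    DifferentiableAt ℂ (fun w : ℂ => ∫ x, c x * (a x : ℂ) ^ w ∂μ) w₀ := by
  set ε := (w₀.re - 1/2) / 2 with hε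
  have hε0 : 0 < ε := by rw [hε]; linarith
  have hM : ∀ x, a x ≤ max M 1 := fun x => (haM x).trans (le_max_left _ _)
  have hball : ∀ w ∈ Metric.ball w₀ ε, |w.re - w₀.re| < ε := fun w hw' => by
    rw [Metric.mem_ball, dist_eq_norm] at hw'
    simpa using (Complex.abs_re_le_norm (w - w₀)).trans_lt hw'
  have hmeas : ∀ w : ℂ, AEStronglyMeasurable (fun x => c x * (a x : ℂ) ^ w) μ := fun w => by
    apply Measurable.aestronglyMeasurable; fun_prop
  have := hasDerivAt_integral_of_dominated_loc_of_deriv_le (μ := μ) (x₀ := w₀)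
    (F := fun w x => c x * (a x : ℂ) ^ w)
    (F' := fun w x => c x * ((a x : ℂ) ^ w * Complex.log (a x : ℂ)))
    (bound := fun x => C * (2 / ε * (max M 1) ^ (w₀.re + ε + ε) * a x ^ ((1:ℝ)/2)))
    (s := Metric.ball w₀ ε) (Metric.ball_mem_nhds _ hε0)
    (Filter.Eventually.of_forall hmeas) ?_ ?_ ?_ ?_ ?_
  · exact this.2.differentiableAt
  · refine ((integrable_rpow_of_half hm ha0 haM hintg hw).const_mul C).mono' (hmeas _)
      (Filter.Eventually.of_forall fun x => ?_)
    rw [norm_mul, Complex.norm_cpow_eq_rpow_re_of_nonneg (ha0 x) (by linarith)]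
    gcongr
    · exact Real.rpow_nonneg (ha0 x) _
    · exact hcC x
  · apply Measurable.aestronglyMeasurable; fun_prop
  · refine Filter.Eventually.of_forall fun x w hw' => ?_
    have hb := abs_lt.1 (hball w hw')
    rw [norm_mul]
    gcongr
    · exact (norm_nonneg _).trans (hcC x)
    · exact hcC x
    · exact norm_cpow_mul_log_le (ha0 x) (hM x) (le_max_right _ _) hε0
        (by linarith [hb.1]) (by linarith [hb.2])
  · exact (hintg.const_mul _).const_mul _
  · refine Filter.Eventually.of_forall fun x w hw' => ?_
    have hb := abs_lt.1 (hball w hw')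
    have hw0 : w ≠ 0 := by
      rintro rfl
      simp at hb
      linarith [hb.1]
    simpa using ((hasDerivAt_id w).const_cpow (c := (a x : ℂ)) (Or.inr hw0)).const_mul (c x)

/-- `sgn f · |f| ^ w`, where `sgn f = f / |f|`: the analytic family through `f` (at `w = 1`) used for
interpolation. At `f = 0` the division by zero makes the value `0`. -/
def modPow (f : ℂ) (w : ℂ) : ℂ := f / (‖f‖ : ℂ) * (‖f‖ : ℂ) ^ w

theorem modPow_one (f : ℂ) : modPow f 1 = f := by
  unfold modPow
  rcases eq_or_ne f 0 with rfl | h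
  · simp
  · have : (‖f‖ : ℂ) ≠ 0 := by simpa using h
    rw [Complex.cpow_one]; field_simp

theorem norm_sgn_le (f : ℂ) : ‖f / (‖f‖ : ℂ)‖ ≤ 1 := by
  rw [norm_div, Complex.norm_real, norm_norm]; exact div_self_le_one _

theorem norm_modPow (f : ℂ) {w : ℂ} (hw : 0 < w.re) : ‖modPow f w‖ = ‖f‖ ^ w.re := by
  unfold modPow
  rcases eq_or_ne f 0 with rfl | h
  · simp [Real.zero_rpow hw.ne']
  · rw [norm_mul, Complex.norm_cpow_eq_rpow_re_of_nonneg (norm_nonneg _) hw.ne', norm_div,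
      Complex.norm_real, norm_norm, div_self (norm_ne_zero_iff.2 h), one_mul]

theorem measurable_modPow (w : ℂ) : Measurable fun f => modPow f w := by
  unfold modPow; fun_prop

/-- Riesz–Thorin interpolation at the midpoint: a bilinear form with kernel bounded by `D` (the
`L¹ × L¹` bound) and with constant `1` on `L² × L²` has constant `D^{1/2}` on `L^{4/3} × L^{4/3}`.
The three lines theorem is applied to `w ↦ ∫ k · sgn f |f|^w · sgn h |h|^w` on `2/3 ≤ Re w ≤ 4/3`:
at `Re w = 4/3` the family lies in `L¹`, at `Re w = 2/3` in `L²`. Integrability of the square roots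
provides room to the left of the strip. -/
theorem riesz_thorin_mid {X Y : Type*} [MeasurableSpace X] [MeasurableSpace Y] {μ : Measure X}
    {ν : Measure Y} [SFinite μ] [SFinite ν] {k : X × Y → ℂ} (hk : Measurable k) {D : ℝ}
    (hD : 0 ≤ D) (hkD : ∀ z, ‖k z‖ ≤ D) {f : X → ℂ} {h : Y → ℂ} (hf : Measurable f) (hh : Measurable h)
    {M : ℝ} (hfM : ∀ x, ‖f x‖ ≤ M) (hhM : ∀ y, ‖h y‖ ≤ M)
    (hfi : Integrable (fun x => ‖f x‖ ^ ((1:ℝ)/2)) μ)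
    (hhi : Integrable (fun x => ‖h x‖ ^ ((1:ℝ)/2)) ν)
    (hL2 : ∀ (f' : X → ℂ) (h' : Y → ℂ), Measurable f' → Measurable h' →
      Integrable f' μ → Integrable h' ν → Integrable (fun x => ‖f' x‖ ^ 2) μ →
      Integrable (fun x => ‖h' x‖ ^ 2) ν →
      ‖∫ z, k z * (f' z.1 * h' z.2) ∂(μ.prod ν)‖ ≤
        (∫ x, ‖f' x‖ ^ 2 ∂μ) ^ ((1:ℝ)/2) * (∫ x, ‖h' x‖ ^ 2 ∂ν) ^ ((1:ℝ)/2)) :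
    ‖∫ z, k z * (f z.1 * h z.2) ∂(μ.prod ν)‖ ≤
      D ^ ((1:ℝ)/2) * ((∫ x, ‖f x‖ ^ ((4:ℝ)/3) ∂μ) ^ ((3:ℝ)/4) *
        (∫ x, ‖h x‖ ^ ((4:ℝ)/3) ∂ν) ^ ((3:ℝ)/4)) := by
  set a : X × Y → ℝ := fun z => ‖f z.1‖ * ‖h z.2‖ with ha
  set c : X × Y → ℂ := fun z => k z * ((f z.1 / (‖f z.1‖ : ℂ)) * (h z.2 / (‖h z.2‖ : ℂ))) with hc
  set F := ∫ x, ‖f x‖ ^ ((4:ℝ)/3) ∂μ with hF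
  set G := ∫ x, ‖h x‖ ^ ((4:ℝ)/3) ∂ν with hG
  have hF0 : 0 ≤ F := integral_nonneg fun x => by positivity
  have hG0 : 0 ≤ G := integral_nonneg fun x => by positivity
  have ha0 : ∀ z, 0 ≤ a z := fun z => by positivity
  have haM : ∀ z, a z ≤ M * M := fun z => by
    have := hfM z.1
    have := hhM z.2
    have : 0 ≤ M := (norm_nonneg _).trans this
    simp only [ha]; gcongr
  have ham : Measurable a := by fun_prop
  have hai : Integrable (fun z => a z ^ ((1:ℝ)/2)) (μ.prod ν) := by
    have := hfi.mul_prod hhi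
    refine this.congr (Filter.Eventually.of_forall fun z => ?_)
    simp only [ha]; rw [Real.mul_rpow (norm_nonneg _) (norm_nonneg _)]
  have hcm : Measurable c := by fun_prop
  have hcD : ∀ z, ‖c z‖ ≤ D := fun z => by
    simp only [hc]
    rw [norm_mul, norm_mul]
    calc _ ≤ D * (1 * 1) := by
          gcongr
          · exact hkD z
          · exact norm_sgn_le _
          · exact norm_sgn_le _
      _ = D := by ring
  set H : ℂ → ℂ := fun w => ∫ z, c z * (a z : ℂ) ^ w ∂(μ.prod ν) with hH
  have hHmod : ∀ w, H w = ∫ z, k z * (modPow (f z.1) w * modPow (h z.2) w) ∂(μ.prod ν) := by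
    intro w
    simp only [hH]
    congr 1; ext z
    simp only [hc, ha, modPow]
    push_cast
    rw [Complex.mul_cpow_ofReal_nonneg (norm_nonneg _) (norm_nonneg _)]
    ring
  have hdiff : ∀ w : ℂ, 1/2 < w.re → DifferentiableAt ℂ H w := fun w hw =>
    differentiableAt_integral_cpow ham ha0 haM hai hcm hcD hw
  have hbound : ∀ w : ℂ, 1/2 < w.re → ‖H w‖ ≤ D * ∫ z, a z ^ w.re ∂(μ.prod ν) := by
    intro w hw
    rw [← integral_const_mul]
    refine norm_integral_le_of_norm_le
      ((integrable_rpow_of_half ham ha0 haM hai hw).const_mul D) (Filter.Eventually.of_forall fun z => ?_)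
    rw [norm_mul, Complex.norm_cpow_eq_rpow_re_of_nonneg (ha0 z) (by linarith)]
    gcongr
    exact hcD z
  have hstrip : closure (Complex.HadamardThreeLines.verticalStrip (2/3) (4/3)) ⊆ {w | 1/2 < w.re} := by
    intro w hw
    have : Complex.HadamardThreeLines.verticalStrip (2/3) (4/3) ⊆ Complex.re ⁻¹' Ici (2/3) :=
      fun w hw => le_of_lt hw.1
    have h2 := closure_minimal this (isClosed_Ici.preimage Complex.continuous_re) hw
    have h3 : (2:ℝ)/3 ≤ w.re := h2
    simp only [mem_ofPred_eq]; linarith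
  have hdc : DiffContOnCl ℂ H (Complex.HadamardThreeLines.verticalStrip (2/3) (4/3)) :=
    DifferentiableOn.diffContOnCl fun w hw => (hdiff w (hstrip hw)).differentiableWithinAt
  have hone : (1:ℂ) ∈ Complex.HadamardThreeLines.verticalClosedStrip (2/3) (4/3) := by
    simp [Complex.HadamardThreeLines.verticalClosedStrip]; norm_num
  have hbdd : BddAbove ((norm ∘ H) '' Complex.HadamardThreeLines.verticalClosedStrip (2/3) (4/3)) := by
    refine ⟨D * ∫ z, (max (M * M) 1) * a z ^ ((1:ℝ)/2) ∂(μ.prod ν), ?_⟩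
    rintro _ ⟨w, hw, rfl⟩
    have hw1 : (2:ℝ)/3 ≤ w.re := hw.1
    have hw2 : w.re ≤ (4:ℝ)/3 := hw.2
    refine (hbound w (by linarith)).trans ?_
    gcongr
    · exact integrable_rpow_of_half ham ha0 haM hai (by linarith)
    · exact hai.const_mul _
    · intro z
      refine (rpow_le_of_half_le (ha0 z) ((haM z).trans (le_max_left _ 1)) (by linarith)).trans ?_
      have := Real.rpow_nonneg (ha0 z) ((1:ℝ)/2)
      simp only
      gcongr
      calc (max (M * M) 1) ^ (w.re - 1/2) ≤ (max (M * M) 1) ^ (1:ℝ) :=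
            Real.rpow_le_rpow_of_exponent_le (le_max_right _ _) (by linarith)
        _ = _ := Real.rpow_one _
  have hright : ∀ w ∈ Complex.re ⁻¹' {(4:ℝ)/3}, ‖H w‖ ≤ D * (F * G) := by
    intro w hw
    have hw' : w.re = 4/3 := hw
    refine (hbound w (by rw [hw']; norm_num)).trans (le_of_eq ?_)
    congr 1
    rw [hF, hG, ← integral_prod_mul, hw']
    congr 1; ext z
    simp only [ha]; rw [Real.mul_rpow (norm_nonneg _) (norm_nonneg _)]
  have hpw : ∀ r : ℝ, 0 ≤ r → (r ^ ((2:ℝ)/3)) ^ 2 = r ^ ((4:ℝ)/3) := fun r hr => by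
    rw [← Real.rpow_natCast, ← Real.rpow_mul hr]; norm_num
  have hleft : ∀ w ∈ Complex.re ⁻¹' {(2:ℝ)/3}, ‖H w‖ ≤ (F * G) ^ ((1:ℝ)/2) := by
    intro w hw
    have hw' : w.re = 2/3 := hw
    have hw0 : 0 < w.re := by rw [hw']; norm_num
    rw [hHmod]
    have hfm : Measurable fun x => modPow (f x) w := (measurable_modPow w).comp hf
    have hhm : Measurable fun x => modPow (h x) w := (measurable_modPow w).comp hh
    have hfn : ∀ x, ‖modPow (f x) w‖ = ‖f x‖ ^ ((2:ℝ)/3) := fun x => by rw [norm_modPow _ hw0, hw']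
    have hhn : ∀ x, ‖modPow (h x) w‖ = ‖h x‖ ^ ((2:ℝ)/3) := fun x => by rw [norm_modPow _ hw0, hw']
    have := hL2 _ _ hfm hhm
      ((integrable_norm_iff hfm.aestronglyMeasurable).1 (by
        simp only [hfn]
        exact integrable_rpow_of_half hf.norm (fun _ => norm_nonneg _) hfM hfi (by norm_num)))
      ((integrable_norm_iff hhm.aestronglyMeasurable).1 (by
        simp only [hhn]
        exact integrable_rpow_of_half hh.norm (fun _ => norm_nonneg _) hhM hhi (by norm_num)))
      (by
        simp only [hfn, hpw _ (norm_nonneg _)]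
        exact integrable_rpow_of_half hf.norm (fun _ => norm_nonneg _) hfM hfi (by norm_num))
      (by
        simp only [hhn, hpw _ (norm_nonneg _)]
        exact integrable_rpow_of_half hh.norm (fun _ => norm_nonneg _) hhM hhi (by norm_num))
    simp only [hfn, hhn, hpw _ (norm_nonneg _)] at this
    rw [Real.mul_rpow hF0 hG0]
    exact this
  have hfinal := Complex.HadamardThreeLines.norm_le_interp_of_mem_verticalClosedStrip'
    (by norm_num) hone hdc hbdd hleft hright
  rw [hHmod] at hfinal
  simp only [modPow_one] at hfinal
  refine hfinal.trans (le_of_eq ?_)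
  have hFG : 0 ≤ F * G := mul_nonneg hF0 hG0
  rw [← Real.rpow_mul hFG, Real.mul_rpow hD hFG, ← Real.mul_rpow hF0 hG0]
  norm_num
  rw [mul_left_comm, ← Real.rpow_add_of_nonneg hFG (by norm_num) (by norm_num)]
  norm_num

/-! ### Plancherel and Parseval -/

section Plancherel
open FourierTransform SchwartzMap
open scoped FourierTransform SchwartzMap ContDiff

/-- Plancherel's theorem for `L¹ ∩ L²`. -/
lemma eLpNorm_fourier_eq {V : Type*} [NormedAddCommGroup V] [InnerProductSpace ℝ V]
    [FiniteDimensional ℝ V] [MeasurableSpace V] [BorelSpace V] {f : V → ℂ}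
    (hf : Integrable f) (h2 : MemLp f 2) :
    MemLp (𝓕 f) 2 ∧ eLpNorm (𝓕 f) 2 volume = eLpNorm f 2 volume := by
  set g : Lp ℂ 2 (volume : Measure V) := h2.toLp f with hg
  have hcont : Continuous (𝓕 f) :=
    VectorFourier.fourierIntegral_continuous Real.continuous_fourierChar
      (by exact continuous_inner) hf
  have hae : ∀ᵐ x, (𝓕 g : Lp ℂ 2 (volume : Measure V)) x = 𝓕 f x := by
    apply ae_eq_of_integral_contDiff_smul_eq
    · exact (Lp.memLp (𝓕 g)).locallyIntegrable (by norm_num)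
    · exact hcont.locallyIntegrable
    · intro φ φ_smooth φ_cpt
      have hg₁ : HasCompactSupport (Complex.ofRealCLM ∘ φ) := φ_cpt.comp_left rfl
      have hg₂ : ContDiff ℝ ∞ (Complex.ofRealCLM ∘ φ) := by fun_prop
      set ψ : 𝓢(V, ℂ) := hg₁.toSchwartzMap hg₂ with hψ
      have e1 : ∫ x, φ x • (𝓕 g : Lp ℂ 2 (volume : Measure V)) x
          = Lp.toTemperedDistribution (𝓕 g : Lp ℂ 2 (volume : Measure V)) ψ := by
        rw [Lp.toTemperedDistribution_apply]
        simp [hψ]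
      rw [e1, ← Lp.fourier_toTemperedDistribution_eq, TemperedDistribution.fourier_apply,
        Lp.toTemperedDistribution_apply]
      have e2 : ∫ x, (𝓕 ψ) x • g x = ∫ x, (𝓕 ψ) x • f x := by
        apply integral_congr_ae
        filter_upwards [h2.coeFn_toLp] with x hx
        rw [hg, hx]
      rw [e2]
      have e3 := VectorFourier.integral_fourierIntegral_smul_eq_flip (L := innerₗ V)
        Real.continuous_fourierChar (by exact continuous_inner) (ψ.integrable (μ := volume)) hf
      have e4 : ∫ x, φ x • 𝓕 f x = ∫ x, ψ x • 𝓕 f x := by simp [hψ]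
      rw [e4]
      simpa using! e3
  have hae' : (𝓕 g : Lp ℂ 2 (volume : Measure V)) =ᵐ[volume] 𝓕 f := hae
  refine ⟨(memLp_congr_ae hae').1 (Lp.memLp _), ?_⟩
  rw [← eLpNorm_congr_ae hae', ← eLpNorm_congr_ae h2.coeFn_toLp]
  have := Lp.norm_fourier_eq g
  rw [Lp.norm_def, Lp.norm_def] at this
  exact (ENNReal.toReal_eq_toReal_iff' (Lp.memLp _).2.ne (Lp.memLp _).2.ne).1 this

end Plancherel

/-- The character `r ↦ e^{-2πir}`. -/
def ech (r : ℝ) : ℂ := Complex.exp (((-2 * Real.pi * r : ℝ) : ℂ) * Complex.I)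

lemma norm_ech (r : ℝ) : ‖ech r‖ = 1 := Complex.norm_exp_ofReal_mul_I _

lemma ech_add (r s : ℝ) : ech (r + s) = ech r * ech s := by
  rw [ech, ech, ech, ← Complex.exp_add]; push_cast; ring_nf

lemma conj_ech (r : ℝ) : (starRingEnd ℂ) (ech r) = ech (-r) := by
  rw [ech, ech, ← Complex.exp_conj]; simp [Complex.conj_ofNat]

@[fun_prop]
lemma continuous_ech : Continuous ech := by unfold ech; fun_prop

/-- The two-dimensional Fourier transform `∫ e^{-2πi z·ζ} f(z) dz`. -/
def F2 (f : ℝ × ℝ → ℂ) (ζ : ℝ × ℝ) : ℂ := ∫ z : ℝ × ℝ, ech (z.1 * ζ.1 + z.2 * ζ.2) * f z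

/-- The Euclidean plane as a measurable copy of `ℝ × ℝ`. -/
def e2 : WithLp 2 (ℝ × ℝ) ≃ᵐ ℝ × ℝ := (MeasurableEquiv.toLp 2 (ℝ × ℝ)).symm

lemma e2_mp : MeasurePreserving e2 := WithLp.volume_preserving_symm_measurableEquiv_toLp_prod ℝ ℝ

open scoped FourierTransform in
lemma F2_eq_fourier (f : ℝ × ℝ → ℂ) (w : WithLp 2 (ℝ × ℝ)) :
    F2 f (e2 w) = 𝓕 (fun v : WithLp 2 (ℝ × ℝ) => f (e2 v)) w := by
  rw [Real.fourier_eq', F2, ← e2_mp.integral_comp e2.measurableEmbedding]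
  refine integral_congr_ae (Filter.Eventually.of_forall fun v => ?_)
  simp only [ech, smul_eq_mul, WithLp.prod_inner_apply]
  congr 4
  simp [e2]
  ring

lemma plancherel2 {f : ℝ × ℝ → ℂ} (hf : Integrable f) (h2 : Integrable (fun z => ‖f z‖ ^ 2)) :
    Integrable (fun ζ => ‖F2 f ζ‖ ^ 2) ∧ ∫ ζ, ‖F2 f ζ‖ ^ 2 = ∫ z, ‖f z‖ ^ 2 := by
  have hf' : Integrable (fun v => f (e2 v)) := e2_mp.integrable_comp_of_integrable hf
  have h2' : Integrable (fun v => ‖f (e2 v)‖ ^ 2) := e2_mp.integrable_comp_of_integrable h2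
  have h2m : MemLp (fun v => f (e2 v)) 2 :=
    (memLp_two_iff_integrable_sq_norm hf'.aestronglyMeasurable).2 h2'
  obtain ⟨ha, hb⟩ := eLpNorm_fourier_eq hf' h2m
  have hc := (memLp_two_iff_integrable_sq_norm ha.1).1 ha
  rw [← e2_mp.integral_comp e2.measurableEmbedding, ← e2_mp.integral_comp e2.measurableEmbedding,
    ← e2_mp.integrable_comp_emb e2.measurableEmbedding]
  have hd : (fun ζ => ‖F2 f ζ‖ ^ 2) ∘ e2 =
      fun w => ‖FourierTransform.fourier (fun v => f (e2 v)) w‖ ^ 2 := by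
    funext w; simp [F2_eq_fourier]
  rw [hd]
  refine ⟨hc, ?_⟩
  simp_rw [F2_eq_fourier]
  have h3 := ha.eLpNorm_eq_integral_rpow_norm (by norm_num) (by norm_num)
  have h4 := h2m.eLpNorm_eq_integral_rpow_norm (by norm_num) (by norm_num)
  rw [h3, h4, ENNReal.ofReal_eq_ofReal_iff (by positivity) (by positivity)] at hb
  simp only [ENNReal.toReal_ofNat, Real.rpow_ofNat] at hb
  exact (Real.rpow_left_inj (by positivity) (by positivity) (by norm_num)).1 hb

/-- The three-dimensional Fourier transform, in coordinates `(τ, ξ, η)`. -/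
def F3 (g : ℝ × ℝ × ℝ → ℂ) (w : ℝ × ℝ × ℝ) : ℂ :=
  ∫ v : ℝ × ℝ × ℝ, ech (v.1 * w.1 + (v.2.1 * w.2.1 + v.2.2 * w.2.2)) * g v

/-- Euclidean three-space. -/
abbrev V3 : Type := WithLp 2 (ℝ × WithLp 2 (ℝ × ℝ))

/-- Euclidean three-space as a measurable copy of `ℝ × ℝ × ℝ`. -/
def e3 : V3 ≃ᵐ ℝ × ℝ × ℝ :=
  (MeasurableEquiv.toLp 2 (ℝ × WithLp 2 (ℝ × ℝ))).symm.trans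
    (MeasurableEquiv.prodCongr (MeasurableEquiv.refl ℝ) e2)

lemma e3_mp : MeasurePreserving e3 :=
  ((MeasurePreserving.id (volume : Measure ℝ)).prod e2_mp).comp
    (WithLp.volume_preserving_symm_measurableEquiv_toLp_prod ℝ (WithLp 2 (ℝ × ℝ)))

/-- The same identification as a continuous linear equivalence. -/
def e3L : V3 ≃L[ℝ] ℝ × ℝ × ℝ :=
  (WithLp.prodContinuousLinearEquiv 2 ℝ ℝ (WithLp 2 (ℝ × ℝ))).trans
    ((ContinuousLinearEquiv.refl ℝ ℝ).prodCongr (WithLp.prodContinuousLinearEquiv 2 ℝ ℝ ℝ))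

lemma e3L_apply (v : V3) : e3L v = e3 v := rfl

open scoped FourierTransform in
lemma F3_eq_fourier (f : ℝ × ℝ × ℝ → ℂ) (w : V3) :
    F3 f (e3 w) = 𝓕 (fun v : V3 => f (e3 v)) w := by
  rw [Real.fourier_eq', F3, ← e3_mp.integral_comp e3.measurableEmbedding]
  refine integral_congr_ae (Filter.Eventually.of_forall fun v => ?_)
  simp only [ech, smul_eq_mul, WithLp.prod_inner_apply]
  congr 4
  have h : ∀ v : V3, e3 v = (WithLp.fst v, (WithLp.snd v).fst, (WithLp.snd v).snd) := fun _ => rfl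
  simp [h]
  ring

/-- The pullback of a Schwartz function on `ℝ × ℝ × ℝ` to Euclidean three-space. -/
def pull (u : SchwartzMap (ℝ × ℝ × ℝ) ℂ) : SchwartzMap V3 ℂ :=
  SchwartzMap.compCLMOfContinuousLinearEquiv ℂ e3L u

lemma pull_apply (u : SchwartzMap (ℝ × ℝ × ℝ) ℂ) (v : V3) : pull u v = u (e3 v) := rfl

open scoped FourierTransform in
lemma F3_eq_fourier_pull (u : SchwartzMap (ℝ × ℝ × ℝ) ℂ) (w : V3) :
    F3 u (e3 w) = (𝓕 (pull u)) w := by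
  rw [F3_eq_fourier, SchwartzMap.fourier_coe]
  rfl

open scoped FourierTransform in
lemma parseval3 (u : SchwartzMap (ℝ × ℝ × ℝ) ℂ) {g : ℝ × ℝ × ℝ → ℂ} (hg : Integrable g) :
    ∫ v, (starRingEnd ℂ) (g v) * u v = ∫ w, (starRingEnd ℂ) (F3 g w) * F3 u w := by
  have hg' : Integrable (fun v => g (e3 v)) := e3_mp.integrable_comp_of_integrable hg
  have key := VectorFourier.integral_sesq_fourierIntegral_eq_neg_flip (innerSL ℂ)
    (L := innerₗ V3) Real.continuous_fourierChar (by exact continuous_inner) hg'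
    ((𝓕 (pull u)).integrable (μ := volume))
  rw [← e3_mp.integral_comp e3.measurableEmbedding, ← e3_mp.integral_comp e3.measurableEmbedding]
  have inv : ∀ x, VectorFourier.fourierIntegral Real.fourierChar volume (-(innerₗ V3).flip)
      (𝓕 (pull u) : SchwartzMap V3 ℂ) x = pull u x := by
    intro x
    have h1 : (𝓕⁻ (𝓕 (pull u))) x = pull u x := by simp
    rw [← h1, SchwartzMap.fourierInv_coe]
    simp [Real.fourierInv_eq, VectorFourier.fourierIntegral]
  simp only [inv] at key
  have key2 : ∫ ξ, (innerSL ℂ (𝓕 (fun v => g (e3 v)) ξ)) ((𝓕 (pull u)) ξ)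
      = ∫ x, (innerSL ℂ (g (e3 x))) (pull u x) := key
  simp only [innerSL_apply_apply, RCLike.inner_apply] at key2
  simp only [F3_eq_fourier_pull]
  simp only [F3_eq_fourier, ← pull_apply]
  simp_rw [mul_comm ((starRingEnd ℂ) _)]
  exact key2.symm

open scoped FourierTransform in
lemma plancherel3 (u : SchwartzMap (ℝ × ℝ × ℝ) ℂ) :
    Integrable (fun w => ‖F3 u w‖ ^ 2) ∧ ∫ w, ‖F3 u w‖ ^ 2 = ∫ v, ‖u v‖ ^ 2 := by
  rw [← e3_mp.integral_comp e3.measurableEmbedding, ← e3_mp.integral_comp e3.measurableEmbedding,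
    ← e3_mp.integrable_comp_emb e3.measurableEmbedding]
  have hd : (fun w => ‖F3 u w‖ ^ 2) ∘ e3 = fun w => ‖(𝓕 (pull u)) w‖ ^ 2 := by
    funext w; simp [F3_eq_fourier_pull]
  rw [hd]
  simp_rw [F3_eq_fourier_pull, ← pull_apply]
  exact ⟨(memLp_two_iff_integrable_sq_norm
    ((𝓕 (pull u)).memLp 2 volume).1).1 ((𝓕 (pull u)).memLp 2 volume),
    SchwartzMap.integral_norm_sq_fourier (pull u)⟩

/-! ### The dispersive estimate at a fixed time -/

/-- The phase `4π²(ξ³ + η³)`: the characteristic surface `τ = ξ³ + η³` after rescaling all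
frequencies by `2π`. -/
def Phi (ζ : ℝ × ℝ) : ℝ := 4 * Real.pi ^ 2 * (ζ.1 ^ 3 + ζ.2 ^ 3)

@[fun_prop]
lemma continuous_Phi : Continuous Phi := by unfold Phi; fun_prop

/-- The frequency region: both components lie in `±[m, b]`. -/
def quad (m b : ℝ) : Set (ℝ × ℝ) := band m b ×ˢ band m b

lemma measurableSet_quad (m b : ℝ) : MeasurableSet (quad m b) :=
  (measurableSet_band m b).prod (measurableSet_band m b)

lemma isCompact_band (m b : ℝ) : IsCompact (band m b) := isCompact_Icc.union isCompact_Icc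

instance isFinite_quad (m b : ℝ) : IsFiniteMeasure (volume.restrict (quad m b)) :=
  isFiniteMeasure_restrict.2 (((isCompact_band m b).prod (isCompact_band m b)).measure_lt_top).ne

/-- The kernel of the frequency-localised propagator at time difference `p`. -/
def propKer (m b p : ℝ) (z : ℝ × ℝ) : ℂ :=
  ∫ ζ in quad m b, ech (p * Phi ζ) * ech (z.1 * ζ.1 + z.2 * ζ.2)

lemma measurable_propKer (m b p : ℝ) : Measurable (propKer m b p) := by
  have : StronglyMeasurable (Function.uncurry fun (z : ℝ × ℝ) (ζ : ℝ × ℝ) =>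
      ech (p * Phi ζ) * ech (z.1 * ζ.1 + z.2 * ζ.2)) := by
    apply Continuous.stronglyMeasurable
    unfold Function.uncurry
    fun_prop
  exact (StronglyMeasurable.integral_prod_right (ν := volume.restrict (quad m b)) this).measurable

lemma norm_band_ech_le {m b p : ℝ} (hm : 0 < m) (hmb : m ≤ b) (hp : p ≠ 0) (q : ℝ) :
    ‖∫ x in band m b, ech (p * (4 * Real.pi ^ 2 * x ^ 3) + q * x)‖ ≤
      12 / √(6 * (8 * Real.pi ^ 3 * |p|) * m) := by
  have hpi := Real.pi_pos
  have h := band_kernel_le (p := -(8 * Real.pi ^ 3 * p)) (-(2 * Real.pi * q)) hm hmb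
    (by simp [hp, hpi.ne'])
  have e : |-(8 * Real.pi ^ 3 * p)| = 8 * Real.pi ^ 3 * |p| := by
    rw [abs_neg, abs_mul, abs_of_pos (by positivity)]
  rw [e] at h
  refine le_trans (le_of_eq ?_) h
  congr 2
  funext x
  rw [ech]
  congr 1
  push_cast
  ring

/-- Dispersive decay of the kernel, uniform in space. -/
lemma norm_propKer_le {m b p : ℝ} (hm : 0 < m) (hmb : m ≤ b) (hp : p ≠ 0) (z : ℝ × ℝ) :
    ‖propKer m b p z‖ ≤ 1 / (|p| * m) := by
  have hpi := Real.pi_pos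
  have e : propKer m b p z = (∫ x in band m b, ech (p * (4 * Real.pi ^ 2 * x ^ 3) + z.1 * x)) *
      ∫ x in band m b, ech (p * (4 * Real.pi ^ 2 * x ^ 3) + z.2 * x) := by
    rw [← integral_prod_mul, Measure.prod_restrict, propKer, quad, ← Measure.volume_eq_prod]
    refine integral_congr_ae (Filter.Eventually.of_forall fun ζ => ?_)
    simp only [← ech_add, Phi]
    congr 1
    ring
  have hpp : 0 < |p| := abs_pos.2 hp
  rw [e, norm_mul]
  calc _ ≤ (12 / √(6 * (8 * Real.pi ^ 3 * |p|) * m)) * (12 / √(6 * (8 * Real.pi ^ 3 * |p|) * m)) :=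
        mul_le_mul (norm_band_ech_le hm hmb hp _) (norm_band_ech_le hm hmb hp _) (norm_nonneg _)
          (by positivity)
    _ = 144 / (6 * (8 * Real.pi ^ 3 * |p|) * m) := by
        rw [div_mul_div_comm, Real.mul_self_sqrt (by positivity)]; norm_num
    _ ≤ 1 / (|p| * m) := by
        have h3 := Real.pi_gt_three
        rw [div_le_div_iff₀ (by positivity) (by positivity)]
        have : (3:ℝ) ≤ Real.pi ^ 3 := by
          nlinarith [pow_le_pow_left₀ (by norm_num) h3.le 3]
        have h4 : 0 < |p| * m := by positivity
        nlinarith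

lemma norm_F2_le (f : ℝ × ℝ → ℂ) (ζ : ℝ × ℝ) : ‖F2 f ζ‖ ≤ ∫ z, ‖f z‖ := by
  refine (norm_integral_le_integral_norm _).trans (le_of_eq ?_)
  simp [norm_ech]

lemma F2_conj (f : ℝ × ℝ → ℂ) (ζ : ℝ × ℝ) :
    F2 (fun z => (starRingEnd ℂ) (f z)) (-ζ) = (starRingEnd ℂ) (F2 f ζ) := by
  rw [F2, F2, ← integral_conj]
  refine integral_congr_ae (Filter.Eventually.of_forall fun z => ?_)
  simp only [map_mul, conj_ech, Prod.fst_neg, Prod.snd_neg]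
  congr 2
  ring

lemma propKer_form_eq (m b p : ℝ) {f h : ℝ × ℝ → ℂ} (hf : Integrable f) (hh : Integrable h) :
    ∫ z : (ℝ × ℝ) × (ℝ × ℝ), propKer m b p (z.1 - z.2) * (f z.1 * h z.2) =
      ∫ ζ in quad m b, ech (p * Phi ζ) * (F2 f ζ * F2 h (-ζ)) := by
  have hintg : Integrable (fun w : ((ℝ × ℝ) × (ℝ × ℝ)) × (ℝ × ℝ) =>
      ech (p * Phi w.2) * ech ((w.1.1 - w.1.2).1 * w.2.1 + (w.1.1 - w.1.2).2 * w.2.2) *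
        (f w.1.1 * h w.1.2)) (volume.prod (volume.restrict (quad m b))) := by
    have h1 : Integrable (fun w : ((ℝ × ℝ) × (ℝ × ℝ)) × (ℝ × ℝ) => (f w.1.1 * h w.1.2))
        (volume.prod (volume.restrict (quad m b))) := by
      have := (hf.mul_prod hh).mul_prod (integrable_const (1:ℂ) (μ := volume.restrict (quad m b)))
      simpa using! this
    refine h1.bdd_mul (c := 1) ?_ ?_
    · apply Continuous.aestronglyMeasurable
      fun_prop
    · exact Filter.Eventually.of_forall fun w => by simp [norm_ech]
  calc _ = ∫ z : (ℝ × ℝ) × (ℝ × ℝ), ∫ ζ in quad m b, ech (p * Phi ζ) *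
        ech ((z.1 - z.2).1 * ζ.1 + (z.1 - z.2).2 * ζ.2) * (f z.1 * h z.2) := by
        simp only [propKer, integral_mul_const]
    _ = ∫ ζ in quad m b, ∫ z : (ℝ × ℝ) × (ℝ × ℝ), ech (p * Phi ζ) *
        ech ((z.1 - z.2).1 * ζ.1 + (z.1 - z.2).2 * ζ.2) * (f z.1 * h z.2) :=
        integral_integral_swap hintg
    _ = _ := by
        refine integral_congr_ae (Filter.Eventually.of_forall fun ζ => ?_)
        simp only [F2]
        rw [← integral_prod_mul, ← integral_const_mul, ← Measure.volume_eq_prod]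
        refine integral_congr_ae (Filter.Eventually.of_forall fun z => ?_)
        have : ech ((z.1 - z.2).1 * ζ.1 + (z.1 - z.2).2 * ζ.2) =
            ech (z.1.1 * ζ.1 + z.1.2 * ζ.2) * ech (z.2.1 * (-ζ).1 + z.2.2 * (-ζ).2) := by
          rw [← ech_add]; congr 1; simp; ring
        simp only [this]
        ring

/-- Energy bound: at a fixed time difference the bilinear form is bounded on `L² × L²`. -/
lemma propKer_form_L2 (m b p : ℝ) {f h : ℝ × ℝ → ℂ} (hf : Integrable f) (hh : Integrable h)
    (hf2 : Integrable (fun x => ‖f x‖ ^ 2)) (hh2 : Integrable (fun x => ‖h x‖ ^ 2)) :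
    ‖∫ z : (ℝ × ℝ) × (ℝ × ℝ), propKer m b p (z.1 - z.2) * (f z.1 * h z.2)‖ ≤
      (∫ x, ‖f x‖ ^ 2) ^ ((1:ℝ)/2) * (∫ x, ‖h x‖ ^ 2) ^ ((1:ℝ)/2) := by
  rw [propKer_form_eq m b p hf hh]
  obtain ⟨a1, a2⟩ := plancherel2 hf hf2
  obtain ⟨b1, b2⟩ := plancherel2 hh hh2
  have c1 : Integrable (fun ζ => ‖F2 h (-ζ)‖ ^ 2) := b1.comp_neg
  have c2 : ∫ ζ, ‖F2 h (-ζ)‖ ^ 2 = ∫ z, ‖h z‖ ^ 2 := by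
    rw [← b2]; exact integral_neg_eq_self (fun ζ => ‖F2 h ζ‖ ^ 2) volume
  have hcont : ∀ {k : ℝ × ℝ → ℂ}, Integrable k → Continuous (F2 k) := by
    intro k hk
    refine continuous_of_dominated (bound := fun z => ‖k z‖) ?_ ?_ hk.norm ?_
    · intro ζ
      exact (by fun_prop : Continuous fun z : ℝ × ℝ =>
        ech (z.1 * ζ.1 + z.2 * ζ.2)).aestronglyMeasurable.mul hk.aestronglyMeasurable
    · intro ζ; exact Filter.Eventually.of_forall fun z => by simp [norm_ech]
    · exact Filter.Eventually.of_forall fun z => by fun_prop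
  have ml1 : MemLp (fun ζ => ‖F2 f ζ‖) (ENNReal.ofReal 2) (volume.restrict (quad m b)) := by
    rw [ENNReal.ofReal_ofNat]
    refine (memLp_two_iff_integrable_sq (hcont hf).norm.aestronglyMeasurable).2 a1.integrableOn
  have ml2 : MemLp (fun ζ => ‖F2 h (-ζ)‖) (ENNReal.ofReal 2) (volume.restrict (quad m b)) := by
    rw [ENNReal.ofReal_ofNat]
    refine (memLp_two_iff_integrable_sq
      (((hcont hh).comp continuous_neg).norm.aestronglyMeasurable)).2 c1.integrableOn
  calc _ ≤ ∫ ζ in quad m b, ‖F2 f ζ‖ * ‖F2 h (-ζ)‖ := by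
        refine (norm_integral_le_integral_norm _).trans (le_of_eq ?_)
        simp [norm_ech]
    _ ≤ (∫ ζ in quad m b, ‖F2 f ζ‖ ^ (2:ℝ)) ^ ((1:ℝ)/2) *
          (∫ ζ in quad m b, ‖F2 h (-ζ)‖ ^ (2:ℝ)) ^ ((1:ℝ)/2) :=
        integral_mul_le_Lp_mul_Lq_of_nonneg Real.HolderConjugate.two_two
          (Filter.Eventually.of_forall fun _ => norm_nonneg _)
          (Filter.Eventually.of_forall fun _ => norm_nonneg _) ml1 ml2
    _ ≤ (∫ ζ, ‖F2 f ζ‖ ^ 2) ^ ((1:ℝ)/2) * (∫ ζ, ‖F2 h (-ζ)‖ ^ 2) ^ ((1:ℝ)/2) := by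
        simp only [Real.rpow_ofNat]
        gcongr
        · exact Filter.Eventually.of_forall fun _ => by positivity
        · exact Measure.restrict_le_self
        · exact Filter.Eventually.of_forall fun _ => by positivity
        · exact Measure.restrict_le_self
    _ = _ := by rw [a2, c2]

/-- The fixed-time `L^{4/3} → L⁴` dispersive estimate in bilinear form. -/
lemma fixed_time {m b p : ℝ} (hm : 0 < m) (hmb : m ≤ b) (hp : p ≠ 0) {f h : ℝ × ℝ → ℂ}
    (hf : Measurable f) (hh : Measurable h) {M : ℝ} (hfM : ∀ x, ‖f x‖ ≤ M) (hhM : ∀ x, ‖h x‖ ≤ M)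
    (hfi : Integrable (fun x => ‖f x‖ ^ ((1:ℝ)/2))) (hhi : Integrable (fun x => ‖h x‖ ^ ((1:ℝ)/2)))
    (hf1 : Integrable f) (hh1 : Integrable h) :
    ‖∫ ζ in quad m b, ech (p * Phi ζ) * (F2 f ζ * F2 h (-ζ))‖ ≤
      (1 / (|p| * m)) ^ ((1:ℝ)/2) * ((∫ x, ‖f x‖ ^ ((4:ℝ)/3)) ^ ((3:ℝ)/4) *
        (∫ x, ‖h x‖ ^ ((4:ℝ)/3)) ^ ((3:ℝ)/4)) := by
  rw [← propKer_form_eq m b p hf1 hh1]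
  exact riesz_thorin_mid (μ := (volume : Measure (ℝ × ℝ))) (ν := (volume : Measure (ℝ × ℝ)))
    (k := fun z => propKer m b p (z.1 - z.2))
    ((measurable_propKer m b p).comp (measurable_fst.sub measurable_snd)) (by positivity)
    (fun z => norm_propKer_le hm hmb hp _) hf hh hfM hhM hfi hhi
    (fun f' h' _ _ hf' hh' hf2 hh2 => propKer_form_L2 m b p hf' hh' hf2 hh2)

/-! ### Restriction to translates of the surface -/

/-- The integrable weight `(1 + r²)⁻¹`. -/
def wgt (r : ℝ) : ℝ := (1 + r ^ 2)⁻¹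

lemma wgt_pos (r : ℝ) : 0 < wgt r := by unfold wgt; positivity

lemma wgt_le_one (r : ℝ) : wgt r ≤ 1 := inv_le_one_of_one_le₀ (by nlinarith [sq_nonneg r])

lemma integrable_wgt : Integrable wgt := integrable_inv_one_add_sq

lemma integrable_wgt2 : Integrable (fun z : ℝ × ℝ => wgt z.1 * wgt z.2) :=
  integrable_wgt.mul_prod integrable_wgt

lemma integrable_wgt3 : Integrable (fun v : ℝ × ℝ × ℝ => wgt v.1 * (wgt v.2.1 * wgt v.2.2)) :=
  integrable_wgt.mul_prod integrable_wgt2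

/-- `g` is continuous and decays like the square of the product weight, which makes `|g|^{1/2}`
integrable on all of space and on all time slices. -/
structure Decays (g : ℝ × ℝ × ℝ → ℂ) (M : ℝ) : Prop where
  cont : Continuous g
  bound : ∀ v, ‖g v‖ ≤ M * (wgt v.1 * (wgt v.2.1 * wgt v.2.2)) ^ 2

namespace Decays

variable {g : ℝ × ℝ × ℝ → ℂ} {M : ℝ}

lemma nonneg (hg : Decays g M) : 0 ≤ M := by
  have := (norm_nonneg _).trans (hg.bound (0, 0, 0))
  simpa [wgt] using this

lemma bound' (hg : Decays g M) (v : ℝ × ℝ × ℝ) :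
    ‖g v‖ ≤ M * (wgt v.1 * (wgt v.2.1 * wgt v.2.2)) := by
  refine (hg.bound v).trans (mul_le_mul_of_nonneg_left ?_ hg.nonneg)
  have h1 := wgt_pos v.1
  have h2 := wgt_pos v.2.1
  have h3 := wgt_pos v.2.2
  refine pow_le_of_le_one (by positivity) ?_ two_ne_zero
  exact mul_le_one₀ (wgt_le_one _) (by positivity)
    (mul_le_one₀ (wgt_le_one _) (by positivity) (wgt_le_one _))

lemma norm_le (hg : Decays g M) (v : ℝ × ℝ × ℝ) : ‖g v‖ ≤ M := by
  refine (hg.bound' v).trans (mul_le_of_le_one_right hg.nonneg ?_)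
  have h1 := wgt_pos v.1
  have h2 := wgt_pos v.2.1
  have h3 := wgt_pos v.2.2
  exact mul_le_one₀ (wgt_le_one _) (by positivity)
    (mul_le_one₀ (wgt_le_one _) (by positivity) (wgt_le_one _))

lemma slice_bound (hg : Decays g M) (t : ℝ) (z : ℝ × ℝ) :
    ‖g (t, z)‖ ≤ M * wgt t * (wgt z.1 * wgt z.2) := by
  have := hg.bound' (t, z)
  simpa [mul_assoc] using this

lemma cont_slice (hg : Decays g M) (t : ℝ) : Continuous (fun z => g (t, z)) :=
  hg.cont.comp (by fun_prop)

lemma integrable (hg : Decays g M) : Integrable g :=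
  (integrable_wgt3.const_mul M).mono' hg.cont.aestronglyMeasurable
    (Filter.Eventually.of_forall hg.bound')

lemma integrable_slice (hg : Decays g M) (t : ℝ) : Integrable (fun z => g (t, z)) :=
  (integrable_wgt2.const_mul (M * wgt t)).mono' (hg.cont_slice t).aestronglyMeasurable
    (Filter.Eventually.of_forall (hg.slice_bound t))

lemma integrable_sqrt_slice (hg : Decays g M) (t : ℝ) :
    Integrable (fun z => ‖g (t, z)‖ ^ ((1:ℝ)/2)) := by
  refine (integrable_wgt2.const_mul (M ^ ((1:ℝ)/2) * wgt t)).mono' ?_ ?_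
  · exact ((hg.cont_slice t).norm.measurable.pow_const _).aestronglyMeasurable
  · refine Filter.Eventually.of_forall fun z => ?_
    have h1 := wgt_pos t
    have h2 := wgt_pos z.1
    have h3 := wgt_pos z.2
    rw [Real.norm_of_nonneg (by positivity)]
    calc ‖g (t, z)‖ ^ ((1:ℝ)/2) ≤ (M * (wgt t * (wgt z.1 * wgt z.2)) ^ 2) ^ ((1:ℝ)/2) := by
          gcongr; exact hg.bound (t, z)
      _ = _ := by
          rw [Real.mul_rpow hg.nonneg (by positivity), ← Real.sqrt_eq_rpow (_ ^ 2),
            Real.sqrt_sq (by positivity)]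
          ring

lemma integrable_four_thirds (hg : Decays g M) (t : ℝ) :
    Integrable (fun z => ‖g (t, z)‖ ^ ((4:ℝ)/3)) := by
  refine ((hg.integrable_slice t).norm.const_mul (M ^ ((1:ℝ)/3))).mono'
    (((hg.cont_slice t).norm.measurable.pow_const _).aestronglyMeasurable)
    (Filter.Eventually.of_forall fun z => ?_)
  rw [Real.norm_of_nonneg (by positivity)]
  have : ‖g (t, z)‖ ^ ((4:ℝ)/3) = ‖g (t, z)‖ ^ ((1:ℝ)/3) * ‖g (t, z)‖ := by
    rw [← Real.rpow_add_one' (norm_nonneg _) (by norm_num)]; norm_num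
  rw [this]
  gcongr
  exact hg.norm_le _

end Decays

/-- The contribution of time `t` to the transform of `g` on the surface `τ = σ + Φ(ζ)`. -/
def slab (g : ℝ × ℝ × ℝ → ℂ) (σ t : ℝ) (ζ : ℝ × ℝ) : ℂ :=
  ech (t * (σ + Phi ζ)) * F2 (fun z => g (t, z)) ζ

lemma stronglyMeasurable_slab {g : ℝ × ℝ × ℝ → ℂ} (hg : Continuous g) (σ : ℝ) :
    StronglyMeasurable (fun w : ℝ × (ℝ × ℝ) => slab g σ w.1 w.2) := by
  refine StronglyMeasurable.mul ?_ ?_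
  · exact (by fun_prop : Continuous fun w : ℝ × (ℝ × ℝ) =>
      ech (w.1 * (σ + Phi w.2))).stronglyMeasurable
  · have : StronglyMeasurable (Function.uncurry fun (w : ℝ × (ℝ × ℝ)) (z : ℝ × ℝ) =>
        ech (z.1 * w.2.1 + z.2 * w.2.2) * g (w.1, z)) := by
      apply Continuous.stronglyMeasurable
      unfold Function.uncurry
      fun_prop
    exact StronglyMeasurable.integral_prod_right (ν := (volume : Measure (ℝ × ℝ))) this

lemma norm_slab_le {g : ℝ × ℝ × ℝ → ℂ} {M : ℝ} (hg : Decays g M) (σ t : ℝ) (ζ : ℝ × ℝ) :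
    ‖slab g σ t ζ‖ ≤ (M * ∫ z : ℝ × ℝ, wgt z.1 * wgt z.2) * wgt t := by
  rw [slab, norm_mul, norm_ech, one_mul]
  refine (norm_F2_le _ _).trans ?_
  calc ∫ z, ‖g (t, z)‖ ≤ ∫ z : ℝ × ℝ, M * wgt t * (wgt z.1 * wgt z.2) :=
        integral_mono (hg.integrable_slice t).norm (integrable_wgt2.const_mul _) (hg.slice_bound t)
    _ = _ := by rw [integral_const_mul]; ring

lemma F3_eq_integral_slab {g : ℝ × ℝ × ℝ → ℂ} (hg : Integrable g) (σ : ℝ) (ζ : ℝ × ℝ) :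
    F3 g (σ + Phi ζ, ζ) = ∫ t, slab g σ t ζ := by
  have hintg : Integrable (fun v : ℝ × ℝ × ℝ =>
      ech (v.1 * (σ + Phi ζ) + (v.2.1 * ζ.1 + v.2.2 * ζ.2)) * g v) := by
    refine hg.bdd_mul (c := 1) ?_ ?_
    · apply Continuous.aestronglyMeasurable
      fun_prop
    · exact Filter.Eventually.of_forall fun w => by simp [norm_ech]
  rw [F3, Measure.volume_eq_prod, integral_prod _ (by rw [← Measure.volume_eq_prod]; exact hintg)]
  refine integral_congr_ae (Filter.Eventually.of_forall fun t => ?_)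
  simp only [slab, F2, ← integral_const_mul, ech_add, mul_assoc]

/-- Fixed-time estimate for a pair of slices. -/
lemma slab_pair_le {g : ℝ × ℝ × ℝ → ℂ} {M m b : ℝ} (hg : Decays g M) (hm : 0 < m) (hmb : m ≤ b)
    (σ : ℝ) {t s : ℝ} (hts : t ≠ s) :
    ‖∫ ζ in quad m b, slab g σ t ζ * (starRingEnd ℂ) (slab g σ s ζ)‖ ≤
      (1 / (|t - s| * m)) ^ ((1:ℝ)/2) * ((∫ z, ‖g (t, z)‖ ^ ((4:ℝ)/3)) ^ ((3:ℝ)/4) *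
        (∫ z, ‖g (s, z)‖ ^ ((4:ℝ)/3)) ^ ((3:ℝ)/4)) := by
  have key := fixed_time hm hmb (sub_ne_zero.2 hts) (f := fun z => g (t, z))
    (h := fun z => (starRingEnd ℂ) (g (s, z))) (hg.cont_slice t).measurable
    (Complex.continuous_conj.comp (hg.cont_slice s)).measurable (M := M)
    (fun z => hg.norm_le _) (fun z => by simpa using hg.norm_le _)
    (hg.integrable_sqrt_slice t) (by simpa using hg.integrable_sqrt_slice s)
    (hg.integrable_slice t)
    ((hg.integrable_slice s).norm.mono'
      (Complex.continuous_conj.comp (hg.cont_slice s)).aestronglyMeasurable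
      (Filter.Eventually.of_forall fun z => by simp))
  simp only [RCLike.norm_conj] at key
  refine le_trans (le_of_eq ?_) key
  have : ∀ ζ, slab g σ t ζ * (starRingEnd ℂ) (slab g σ s ζ) =
      ech ((t - s) * σ) * (ech ((t - s) * Phi ζ) * (F2 (fun z => g (t, z)) ζ *
        F2 (fun z => (starRingEnd ℂ) (g (s, z))) (-ζ))) := by
    intro ζ
    have e : ech ((t - s) * σ) * ech ((t - s) * Phi ζ) =
        ech (t * (σ + Phi ζ)) * ech (-(s * (σ + Phi ζ))) := by
      rw [← ech_add, ← ech_add]; congr 1; ring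
    rw [F2_conj, slab, slab, map_mul, conj_ech, ← mul_assoc (ech _) (ech _), e]
    ring
  simp_rw [this, integral_const_mul, norm_mul, norm_ech, one_mul]

/-- Squaring out the time integral. -/
lemma lintegral_sq_le_pairs {g : ℝ × ℝ × ℝ → ℂ} {M m b : ℝ} (hg : Decays g M) (σ : ℝ) :
    ∫⁻ ζ in quad m b, ‖F3 g (σ + Phi ζ, ζ)‖ₑ ^ 2 ≤
      ∫⁻ t, ∫⁻ s, ‖∫ ζ in quad m b, slab g σ t ζ * (starRingEnd ℂ) (slab g σ s ζ)‖ₑ := by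
  set A := M * ∫ z : ℝ × ℝ, wgt z.1 * wgt z.2 with hA
  simp_rw [F3_eq_integral_slab hg.integrable]
  set S : ℝ × ℝ → ℂ := fun ζ => ∫ t, slab g σ t ζ with hS
  have hmeas := stronglyMeasurable_slab hg.cont σ
  have hSm : StronglyMeasurable S :=
    StronglyMeasurable.integral_prod_right (ν := (volume : Measure ℝ))
      (hmeas.comp_measurable measurable_swap)
  have hSb : ∀ ζ, ‖S ζ‖ ≤ ∫ t, A * wgt t := fun ζ =>
    norm_integral_le_of_norm_le (integrable_wgt.const_mul A)
      (Filter.Eventually.of_forall fun t => norm_slab_le hg σ t ζ)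
  have hSi : Integrable (fun ζ => ‖S ζ‖ ^ 2) (volume.restrict (quad m b)) := by
    refine Integrable.of_bound (C := (∫ t, A * wgt t) ^ 2)
      (hSm.norm.pow 2).aestronglyMeasurable (Filter.Eventually.of_forall fun ζ => ?_)
    rw [Real.norm_of_nonneg (by positivity)]
    gcongr
    exact hSb ζ
  have hpair : Integrable (fun w : (ℝ × ℝ) × (ℝ × ℝ) =>
      slab g σ w.2.1 w.1 * (starRingEnd ℂ) (slab g σ w.2.2 w.1))
      ((volume.restrict (quad m b)).prod volume) := by
    have hdom : Integrable (fun w : (ℝ × ℝ) × (ℝ × ℝ) => (1:ℝ) * ((A * wgt w.2.1) * (A * wgt w.2.2)))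
        ((volume.restrict (quad m b)).prod volume) :=
      (integrable_const (1:ℝ) (μ := volume.restrict (quad m b))).mul_prod
        ((integrable_wgt.const_mul A).mul_prod (integrable_wgt.const_mul A))
    refine hdom.mono' ?_ (Filter.Eventually.of_forall fun w => ?_)
    · refine StronglyMeasurable.aestronglyMeasurable ?_
      refine StronglyMeasurable.mul ?_ ?_
      · exact hmeas.comp_measurable (g := fun w : (ℝ × ℝ) × (ℝ × ℝ) => (w.2.1, w.1)) (by fun_prop)
      · exact Complex.continuous_conj.comp_stronglyMeasurable
          (hmeas.comp_measurable (g := fun w : (ℝ × ℝ) × (ℝ × ℝ) => (w.2.2, w.1)) (by fun_prop))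
    · rw [norm_mul, RCLike.norm_conj, one_mul]
      exact mul_le_mul (norm_slab_le hg _ _ _) (norm_slab_le hg _ _ _) (norm_nonneg _)
        ((norm_nonneg _).trans (norm_slab_le hg σ _ w.1))
  have e1 : ∫⁻ ζ in quad m b, ‖S ζ‖ₑ ^ 2 = ENNReal.ofReal (∫ ζ in quad m b, ‖S ζ‖ ^ 2) := by
    rw [ofReal_integral_eq_lintegral_ofReal hSi (Filter.Eventually.of_forall fun _ => by positivity)]
    refine lintegral_congr fun ζ => ?_
    rw [← ofReal_norm, ENNReal.ofReal_pow (norm_nonneg _)]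
  have e2 : ((∫ ζ in quad m b, ‖S ζ‖ ^ 2 : ℝ) : ℂ) =
      ∫ p : ℝ × ℝ, ∫ ζ in quad m b, slab g σ p.1 ζ * (starRingEnd ℂ) (slab g σ p.2 ζ) := by
    rw [← integral_integral_swap hpair, ← integral_complex_ofReal]
    refine integral_congr_ae (Filter.Eventually.of_forall fun ζ => ?_)
    simp only
    rw [Measure.volume_eq_prod, integral_prod_mul (fun t => slab g σ t ζ)
      (fun s => (starRingEnd ℂ) (slab g σ s ζ)), integral_conj, Complex.mul_conj,
      Complex.normSq_eq_norm_sq]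
  have e3 : ENNReal.ofReal (∫ ζ in quad m b, ‖S ζ‖ ^ 2) =
      ‖((∫ ζ in quad m b, ‖S ζ‖ ^ 2 : ℝ) : ℂ)‖ₑ := by
    rw [← ofReal_norm, Complex.norm_real,
      Real.norm_of_nonneg (integral_nonneg fun _ => by positivity)]
  rw [e1, e3, e2]
  refine (enorm_integral_le_lintegral_enorm _).trans ?_
  rw [Measure.volume_eq_prod]
  exact lintegral_prod_le _

/-- The restriction estimate on each translate of the surface. -/
lemma restriction {g : ℝ × ℝ × ℝ → ℂ} {M m b : ℝ} (hg : Decays g M) (hm : 0 < m) (hmb : m ≤ b)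
    (σ : ℝ) :
    ∫⁻ ζ in quad m b, ‖F3 g (σ + Phi ζ, ζ)‖ₑ ^ 2 ≤
      ENNReal.ofReal (m ^ (-(1:ℝ)/2)) * (12 * (∫⁻ v, ‖g v‖ₑ ^ ((4:ℝ)/3)) ^ ((3:ℝ)/2)) := by
  set ψ : ℝ → ℝ≥0∞ := fun t => (∫⁻ z, ‖g (t, z)‖ₑ ^ ((4:ℝ)/3)) ^ ((3:ℝ)/4) with hψ
  have hgm : Measurable (fun v => ‖g v‖ₑ ^ ((4:ℝ)/3)) := hg.cont.measurable.enorm.pow_const _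
  have hψm : Measurable ψ := (Measurable.lintegral_prod_right' hgm).pow_const _
  have hψe : ∀ t, ψ t = ENNReal.ofReal ((∫ z, ‖g (t, z)‖ ^ ((4:ℝ)/3)) ^ ((3:ℝ)/4)) := by
    intro t
    rw [← ENNReal.ofReal_rpow_of_nonneg (integral_nonneg fun _ => by positivity) (by norm_num),
      ofReal_integral_eq_lintegral_ofReal (hg.integrable_four_thirds t)
        (Filter.Eventually.of_forall fun _ => by positivity)]
    simp only [hψ]
    congr 2
    funext z
    rw [← ofReal_norm, ENNReal.ofReal_rpow_of_nonneg (norm_nonneg _) (by norm_num)]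
  have hψf : ∀ t, ψ t ≠ ∞ := fun t => by rw [hψe]; exact ENNReal.ofReal_ne_top
  have hψi : ∫⁻ t, ψ t ^ ((4:ℝ)/3) = ∫⁻ v, ‖g v‖ₑ ^ ((4:ℝ)/3) := by
    rw [Measure.volume_eq_prod, lintegral_prod _ hgm.aemeasurable]
    refine lintegral_congr fun t => ?_
    rw [hψ, ← ENNReal.rpow_mul]
    norm_num
  rw [← hψi]
  refine (lintegral_sq_le_pairs hg σ).trans ?_
  refine le_trans ?_ (mul_le_mul_right (hls hψm hψf) _)
  rw [← lintegral_const_mul' _ _ ENNReal.ofReal_ne_top]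
  refine lintegral_mono fun t => ?_
  simp only
  rw [← lintegral_const_mul' _ _ ENNReal.ofReal_ne_top]
  refine lintegral_mono_ae ?_
  have hne : ∀ᵐ s : ℝ, s ≠ t := by simp [ae_iff]
  filter_upwards [hne] with s hs
  rw [hψe t, hψe s, ← ENNReal.ofReal_mul (by positivity), ← ENNReal.ofReal_mul (by positivity),
    ← ENNReal.ofReal_mul (by positivity), ← ofReal_norm]
  refine ENNReal.ofReal_le_ofReal ((slab_pair_le hg hm hmb σ hs.symm).trans (le_of_eq ?_))
  have h1 : (1 / (|t - s| * m)) ^ ((1:ℝ)/2) = m ^ (-(1:ℝ)/2) * |t - s| ^ (-(1:ℝ)/2) := by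
    rw [one_div, Real.inv_rpow (by positivity), Real.mul_rpow (by positivity) hm.le, neg_div,
      Real.rpow_neg hm.le, Real.rpow_neg (by positivity), mul_inv, mul_comm]
  rw [h1]
  ring

/-! ### Duality and the localised estimate -/

lemma wgt_ge {r R : ℝ} (h : |r| ≤ R) : 1 ≤ (1 + R) ^ 2 * wgt r := by
  rw [wgt, ← div_eq_mul_inv, one_le_div (by positivity)]
  have h0 := abs_nonneg r
  nlinarith [sq_abs r]

/-- Schwartz functions are dominated by the product weight. -/
lemma schwartz_le_wgt (u : SchwartzMap (ℝ × ℝ × ℝ) ℂ) :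
    ∃ M : ℝ, ∀ v : ℝ × ℝ × ℝ, ‖u v‖ ≤ M * (wgt v.1 * (wgt v.2.1 * wgt v.2.2)) := by
  refine ⟨2 ^ 6 * ((Finset.Iic (6, 0)).sup fun m => SchwartzMap.seminorm ℝ m.1 m.2) u, fun v => ?_⟩
  have h := SchwartzMap.one_add_le_sup_seminorm_apply (𝕜 := ℝ) (m := (6, 0)) (k := 6) (n := 0)
    le_rfl le_rfl u v
  rw [norm_iteratedFDeriv_zero] at h
  have a1 := wgt_ge (r := v.1) (R := ‖v‖) (by simpa using norm_fst_le v)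
  have a2 := wgt_ge (r := v.2.1) (R := ‖v‖)
    (by simpa using (norm_fst_le v.2).trans (norm_snd_le v))
  have a3 := wgt_ge (r := v.2.2) (R := ‖v‖)
    (by simpa using (norm_snd_le v.2).trans (norm_snd_le v))
  have p1 := wgt_pos v.1
  have p2 := wgt_pos v.2.1
  have p3 := wgt_pos v.2.2
  calc ‖u v‖ = ‖u v‖ * (1 * (1 * 1)) := by ring
    _ ≤ ‖u v‖ * (((1 + ‖v‖) ^ 2 * wgt v.1) * (((1 + ‖v‖) ^ 2 * wgt v.2.1) *
        ((1 + ‖v‖) ^ 2 * wgt v.2.2))) := by gcongr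
    _ = ((1 + ‖v‖) ^ 6 * ‖u v‖) * (wgt v.1 * (wgt v.2.1 * wgt v.2.2)) := by ring
    _ ≤ _ := by gcongr

lemma schwartz_integrable (u : SchwartzMap (ℝ × ℝ × ℝ) ℂ) : Integrable u := by
  obtain ⟨M, hM⟩ := schwartz_le_wgt u
  exact (integrable_wgt3.const_mul M).mono' u.continuous.aestronglyMeasurable
    (Filter.Eventually.of_forall hM)

lemma decays_cube (u : SchwartzMap (ℝ × ℝ × ℝ) ℂ) :
    ∃ M : ℝ, Decays (fun v => ((‖u v‖ ^ 2 : ℝ) : ℂ) * u v) M := by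
  obtain ⟨M, hM⟩ := schwartz_le_wgt u
  refine ⟨M ^ 3, ⟨?_, fun v => ?_⟩⟩
  · have := u.continuous
    fun_prop
  · have p1 := wgt_pos v.1
    have p2 := wgt_pos v.2.1
    have p3 := wgt_pos v.2.2
    have hM0 : 0 ≤ M := by
      have := (norm_nonneg _).trans (hM (0, 0, 0))
      simpa [wgt] using this
    have hw : wgt v.1 * (wgt v.2.1 * wgt v.2.2) ≤ 1 := mul_le_one₀ (wgt_le_one _) (by positivity)
      (mul_le_one₀ (wgt_le_one _) (by positivity) (wgt_le_one _))
    rw [norm_mul, Complex.norm_real, Real.norm_of_nonneg (by positivity), ← pow_succ]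
    calc ‖u v‖ ^ 3 ≤ (M * (wgt v.1 * (wgt v.2.1 * wgt v.2.2))) ^ 3 := by gcongr; exact hM v
      _ = M ^ 3 * (wgt v.1 * (wgt v.2.1 * wgt v.2.2)) ^ 3 := by ring
      _ ≤ M ^ 3 * (wgt v.1 * (wgt v.2.1 * wgt v.2.2)) ^ 2 := by
          gcongr M ^ 3 * ?_
          exact pow_le_pow_of_le_one (by positivity) hw (by norm_num)

lemma continuous_F3 {g : ℝ × ℝ × ℝ → ℂ} (hg : Integrable g) : Continuous (F3 g) := by
  refine continuous_of_dominated (bound := fun z => ‖g z‖) ?_ ?_ hg.norm ?_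
  · intro w
    exact (by fun_prop : Continuous fun v : ℝ × ℝ × ℝ =>
      ech (v.1 * w.1 + (v.2.1 * w.2.1 + v.2.2 * w.2.2))).aestronglyMeasurable.mul
        hg.aestronglyMeasurable
  · intro w; exact Filter.Eventually.of_forall fun z => by simp [norm_ech]
  · exact Filter.Eventually.of_forall fun z => by fun_prop

/-- The two normalisations of the space-time Fourier transform. -/
lemma ftt_eq_F3 {u : ℝ × ℝ × ℝ → ℂ} (hu : Integrable u) (w : ℝ × ℝ × ℝ) :
    ftt (fun t x y => u (t, x, y)) (2 * Real.pi * w.1) (2 * Real.pi * w.2.1)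
      (2 * Real.pi * w.2.2) = F3 u w := by
  have hintg : Integrable (fun v : ℝ × ℝ × ℝ =>
      ech (v.1 * w.1 + (v.2.1 * w.2.1 + v.2.2 * w.2.2)) * u v) (volume.prod volume) := by
    rw [← Measure.volume_eq_prod]
    refine hu.bdd_mul (c := 1) ?_ ?_
    · apply Continuous.aestronglyMeasurable
      fun_prop
    · exact Filter.Eventually.of_forall fun w => by simp [norm_ech]
  rw [F3, ftt, Measure.volume_eq_prod, integral_prod _ hintg]
  refine integral_congr_ae ?_
  filter_upwards [hintg.prod_right_ae] with t ht
  rw [Measure.volume_eq_prod] at ht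
  rw [Measure.volume_eq_prod, integral_prod _ ht]
  refine integral_congr_ae (Filter.Eventually.of_forall fun x => ?_)
  refine integral_congr_ae (Filter.Eventually.of_forall fun y => ?_)
  simp only [ech]
  congr 2
  push_cast
  ring

/-- The `δ`-neighbourhood, in the `τ` direction, of the surface over the frequency region. -/
def nbhd (m b δ : ℝ) : Set (ℝ × ℝ × ℝ) := {w | w.1 - Phi w.2 ∈ Icc (-δ) δ ∧ w.2 ∈ quad m b}

lemma measurableSet_nbhd (m b δ : ℝ) : MeasurableSet (nbhd m b δ) := by
  refine MeasurableSet.inter ?_ (measurable_snd (measurableSet_quad m b))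
  exact (by fun_prop : Continuous fun w : ℝ × ℝ × ℝ => w.1 - Phi w.2).measurable measurableSet_Icc

/-- Integrating the restriction estimate over the translates of the surface. -/
lemma restriction_nbhd {g : ℝ × ℝ × ℝ → ℂ} {M m b δ : ℝ} (hg : Decays g M) (hm : 0 < m)
    (hmb : m ≤ b) :
    ∫⁻ w in nbhd m b δ, ‖F3 g w‖ₑ ^ 2 ≤ ENNReal.ofReal (2 * δ) *
      (ENNReal.ofReal (m ^ (-(1:ℝ)/2)) * (12 * (∫⁻ v, ‖g v‖ₑ ^ ((4:ℝ)/3)) ^ ((3:ℝ)/2))) := by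
  have hFm : Measurable (fun w => ‖F3 g w‖ₑ ^ 2) :=
    ((continuous_F3 hg.integrable).measurable.enorm).pow_const 2
  set f : ℝ × ℝ × ℝ → ℝ≥0∞ := (nbhd m b δ).indicator (fun w => ‖F3 g w‖ₑ ^ 2) with hf
  have hfm : Measurable f := hFm.indicator (measurableSet_nbhd m b δ)
  rw [← lintegral_indicator (measurableSet_nbhd m b δ), ← hf, Measure.volume_eq_prod,
    lintegral_prod_symm' _ hfm]
  have e1 : ∀ ζ : ℝ × ℝ, ∫⁻ τ, f (τ, ζ) = ∫⁻ σ, f (σ + Phi ζ, ζ) := fun ζ =>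
    (lintegral_add_right_eq_self (fun τ => f (τ, ζ)) (Phi ζ)).symm
  simp_rw [e1]
  have hcm : Measurable (Function.uncurry fun (ζ : ℝ × ℝ) (σ : ℝ) => f (σ + Phi ζ, ζ)) :=
    hfm.comp (by
      have : Continuous fun p : (ℝ × ℝ) × ℝ => (p.2 + Phi p.1, p.1) := by fun_prop
      exact this.measurable)
  rw [lintegral_lintegral_swap hcm.aemeasurable]
  have e2 : ∀ σ : ℝ, ∫⁻ ζ, f (σ + Phi ζ, ζ) ≤ (Icc (-δ) δ).indicator
      (fun _ => ENNReal.ofReal (m ^ (-(1:ℝ)/2)) *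
        (12 * (∫⁻ v, ‖g v‖ₑ ^ ((4:ℝ)/3)) ^ ((3:ℝ)/2))) σ := by
    intro σ
    by_cases hσ : σ ∈ Icc (-δ) δ
    · rw [indicator_of_mem hσ]
      refine le_trans (le_of_eq ?_) (restriction hg hm hmb σ)
      rw [← lintegral_indicator (measurableSet_quad m b)]
      refine lintegral_congr fun ζ => ?_
      by_cases hζ : ζ ∈ quad m b
      · have : (σ + Phi ζ, ζ) ∈ nbhd m b δ := ⟨by simpa using hσ, hζ⟩
        rw [hf, indicator_of_mem this, indicator_of_mem hζ]
      · have : (σ + Phi ζ, ζ) ∉ nbhd m b δ := fun h => hζ h.2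
        rw [hf, indicator_of_notMem this, indicator_of_notMem hζ]
    · rw [indicator_of_notMem hσ, nonpos_iff_eq_zero]
      refine (lintegral_congr fun ζ => ?_).trans lintegral_zero
      have : (σ + Phi ζ, ζ) ∉ nbhd m b δ := fun h => hσ (by simpa using h.1)
      rw [hf, indicator_of_notMem this]
  refine (lintegral_mono e2).trans (le_of_eq ?_)
  rw [lintegral_indicator measurableSet_Icc, setLIntegral_const, Real.volume_Icc, mul_comm]
  congr 2
  ring

/-- Duality: the `L⁴` bound for a Schwartz function with transform supported in `nbhd m b δ`. -/
lemma l4_of_support (u : SchwartzMap (ℝ × ℝ × ℝ) ℂ) {m b δ : ℝ} (hm : 0 < m)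
    (hmb : m ≤ b) (hsupp : ∀ w, F3 u w ≠ 0 → w ∈ nbhd m b δ) :
    (∫⁻ v, ‖u v‖ₑ ^ (4:ℝ)) ^ ((1:ℝ)/4) ≤
      (ENNReal.ofReal (2 * δ) * (ENNReal.ofReal (m ^ (-(1:ℝ)/2)) * 12)) ^ ((1:ℝ)/2) *
        (∫⁻ v, ‖u v‖ₑ ^ (2:ℝ)) ^ ((1:ℝ)/2) := by
  obtain ⟨M, hg⟩ := decays_cube u
  set g : ℝ × ℝ × ℝ → ℂ := fun v => ((‖u v‖ ^ 2 : ℝ) : ℂ) * u v with hgdef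
  set X := ∫⁻ v, ‖u v‖ₑ ^ (4:ℝ) with hX
  set K := ENNReal.ofReal (2 * δ) * (ENNReal.ofReal (m ^ (-(1:ℝ)/2)) * 12) with hK
  have hui : Integrable u := schwartz_integrable u
  have hX4 : X = ENNReal.ofReal (∫ v, ‖u v‖ ^ 4) ∧ Integrable (fun v => ‖u v‖ ^ 4) := by
    have hi : Integrable (fun v => ‖u v‖ ^ 4) := by
      have := hg.integrable.norm.mul_bdd (c := (SchwartzMap.seminorm ℝ 0 0) u) (g := fun v => ‖u v‖)
        u.continuous.norm.aestronglyMeasurable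
        (Filter.Eventually.of_forall fun v => by simpa using SchwartzMap.norm_le_seminorm ℝ u v)
      refine this.congr (Filter.Eventually.of_forall fun v => ?_)
      simp only [hgdef, norm_mul, Complex.norm_real, norm_pow, norm_norm]
      ring
    refine ⟨?_, hi⟩
    rw [ofReal_integral_eq_lintegral_ofReal hi (Filter.Eventually.of_forall fun _ => by positivity)]
    refine lintegral_congr fun v => ?_
    rw [← ofReal_norm, ENNReal.ofReal_rpow_of_nonneg (norm_nonneg _) (by norm_num)]
    norm_num
  have hXtop : X ≠ ∞ := by rw [hX4.1]; exact ENNReal.ofReal_ne_top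
  have hgX : ∫⁻ v, ‖g v‖ₑ ^ ((4:ℝ)/3) = X := by
    refine lintegral_congr fun v => ?_
    have : ‖g v‖ₑ = ‖u v‖ₑ ^ (3:ℝ) := by
      rw [← ofReal_norm, ← ofReal_norm, ENNReal.ofReal_rpow_of_nonneg (norm_nonneg _) (by norm_num)]
      congr 1
      simp only [hgdef, norm_mul, Complex.norm_real, norm_pow, norm_norm, Real.rpow_ofNat]
      ring
    rw [this, ← ENNReal.rpow_mul]
    norm_num
  have hXe : X = ‖∫ v, (starRingEnd ℂ) (g v) * u v‖ₑ := by
    have : ∫ v, (starRingEnd ℂ) (g v) * u v = ((∫ v, ‖u v‖ ^ 4 : ℝ) : ℂ) := by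
      rw [← integral_complex_ofReal]
      refine integral_congr_ae (Filter.Eventually.of_forall fun v => ?_)
      simp only [hgdef, map_mul, Complex.conj_ofReal, mul_assoc, Complex.conj_mul']
      push_cast
      ring
    rw [this, hX4.1, ← ofReal_norm, Complex.norm_real,
      Real.norm_of_nonneg (integral_nonneg fun _ => by positivity)]
  have hY : ∫⁻ w, ‖F3 u w‖ₑ ^ (2:ℝ) = ∫⁻ v, ‖u v‖ₑ ^ (2:ℝ) := by
    obtain ⟨h1, h2⟩ := plancherel3 u
    have h3 : Integrable (fun v => ‖u v‖ ^ 2) := by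
      simp_rw [pow_two]
      exact hui.norm.mul_bdd (c := (SchwartzMap.seminorm ℝ 0 0) u)
        u.continuous.norm.aestronglyMeasurable
        (Filter.Eventually.of_forall fun v => by simpa using SchwartzMap.norm_le_seminorm ℝ u v)
    have h4 : ∀ {k : ℝ × ℝ × ℝ → ℂ}, Integrable (fun v => ‖k v‖ ^ 2) →
        ∫⁻ v, ‖k v‖ₑ ^ (2:ℝ) = ENNReal.ofReal (∫ v, ‖k v‖ ^ 2) := by
      intro k hk
      rw [ofReal_integral_eq_lintegral_ofReal hk
        (Filter.Eventually.of_forall fun _ => by positivity)]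
      refine lintegral_congr fun v => ?_
      rw [← ofReal_norm, ENNReal.ofReal_rpow_of_nonneg (norm_nonneg _) (by norm_num)]
      norm_num
    rw [h4 h1, h4 h3, h2]
  set Y := ∫⁻ v, ‖u v‖ₑ ^ (2:ℝ) with hYdef
  have hmain : X ≤ (K * X ^ ((3:ℝ)/2)) ^ ((1:ℝ)/2) * Y ^ ((1:ℝ)/2) := by
    calc X = ‖∫ w, (starRingEnd ℂ) (F3 g w) * F3 u w‖ₑ := by rw [hXe, parseval3 u hg.integrable]
      _ ≤ ∫⁻ w, ‖(starRingEnd ℂ) (F3 g w) * F3 u w‖ₑ := enorm_integral_le_lintegral_enorm _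
      _ = ∫⁻ w in nbhd m b δ, ‖F3 g w‖ₑ * ‖F3 u w‖ₑ := by
          rw [← lintegral_indicator (measurableSet_nbhd m b δ)]
          refine lintegral_congr fun w => ?_
          by_cases hw : w ∈ nbhd m b δ
          · rw [indicator_of_mem hw, enorm_mul, RCLike.enorm_conj]
          · have : F3 u w = 0 := by by_contra h; exact hw (hsupp w h)
            rw [indicator_of_notMem hw, this]; simp
      _ ≤ (∫⁻ w in nbhd m b δ, ‖F3 g w‖ₑ ^ (2:ℝ)) ^ ((1:ℝ)/2) *
            (∫⁻ w in nbhd m b δ, ‖F3 u w‖ₑ ^ (2:ℝ)) ^ ((1:ℝ)/2) :=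
          ENNReal.lintegral_mul_le_Lp_mul_Lq _ Real.HolderConjugate.two_two
            (continuous_F3 hg.integrable).measurable.enorm.aemeasurable
            (continuous_F3 hui).measurable.enorm.aemeasurable
      _ ≤ _ := by
          rw [← hY]
          gcongr
          · simp only [ENNReal.rpow_ofNat]
            refine (restriction_nbhd hg hm hmb).trans (le_of_eq ?_)
            rw [hgX, hK]
            ring
          · exact Measure.restrict_le_self
  rcases eq_or_ne X 0 with h0 | h0
  · rw [h0, ENNReal.zero_rpow_of_pos (by norm_num)]; exact zero_le
  have hsplit : X = X ^ ((1:ℝ)/4) * X ^ ((3:ℝ)/4) := by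
    rw [← ENNReal.rpow_add _ _ h0 hXtop]; norm_num
  have h34 : X ^ ((3:ℝ)/4) ≠ 0 := by simp [h0, hXtop]
  have h34' : X ^ ((3:ℝ)/4) ≠ ∞ := ENNReal.rpow_ne_top_of_nonneg (by norm_num) hXtop
  rw [ENNReal.mul_rpow_of_nonneg _ _ (by norm_num : (0:ℝ) ≤ 1/2), ← ENNReal.rpow_mul] at hmain
  rw [← ENNReal.mul_le_mul_iff_left h34 h34', ← hsplit]
  refine hmain.trans (le_of_eq ?_)
  norm_num
  ring

/-- The support condition, rescaled by `2π`, places the transform in `nbhd`. -/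
lemma mem_nbhd_of_support {c₁ c₂ N L : ℝ} (hc₁ : 0 < c₁) (hc : c₁ ≤ c₂) (w : ℝ × ℝ × ℝ)
    (h1 : N / 2 ≤ √((2 * Real.pi * w.2.1) ^ 2 + (2 * Real.pi * w.2.2) ^ 2))
    (h2 : √((2 * Real.pi * w.2.1) ^ 2 + (2 * Real.pi * w.2.2) ^ 2) ≤ 2 * N)
    (h3 : |2 * Real.pi * w.1 - (2 * Real.pi * w.2.1) ^ 3 - (2 * Real.pi * w.2.2) ^ 3| ≤ 2 * L)
    (h4 : c₁ * |2 * Real.pi * w.2.2| ≤ |2 * Real.pi * w.2.1|)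
    (h5 : |2 * Real.pi * w.2.1| ≤ c₂ * |2 * Real.pi * w.2.2|) :
    w ∈ nbhd (min 1 c₁ / (4 * Real.pi * (1 + c₂)) * N) (N / Real.pi) (L / Real.pi) := by
  have hpi := Real.pi_pos
  have hc2 : 0 < c₂ := hc₁.trans_le hc
  set ξ := 2 * Real.pi * w.2.1 with hξ
  set η := 2 * Real.pi * w.2.2 with hη
  have hN : 0 ≤ N := by have := Real.sqrt_nonneg (ξ ^ 2 + η ^ 2); linarith
  have hs : √(ξ ^ 2 + η ^ 2) ≤ |ξ| + |η| := by
    rw [Real.sqrt_le_left (by positivity)]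
    nlinarith [sq_abs ξ, sq_abs η, mul_nonneg (abs_nonneg ξ) (abs_nonneg η)]
  have hηlow : N ≤ 2 * (1 + c₂) * |η| := by nlinarith
  have hξup : |ξ| ≤ 2 * N := (Real.abs_le_sqrt (by nlinarith [sq_nonneg η])).trans h2
  have hηup : |η| ≤ 2 * N := (Real.abs_le_sqrt (by nlinarith [sq_nonneg ξ])).trans h2
  have hband : ∀ {r : ℝ}, min 1 c₁ * N ≤ 2 * (1 + c₂) * |2 * Real.pi * r| →
      |2 * Real.pi * r| ≤ 2 * N →
      r ∈ band (min 1 c₁ / (4 * Real.pi * (1 + c₂)) * N) (N / Real.pi) := by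
    intro r hlo hup
    rw [abs_mul, abs_of_pos (by positivity : 0 < 2 * Real.pi)] at hlo hup
    have k1 : min 1 c₁ / (4 * Real.pi * (1 + c₂)) * N ≤ |r| := by
      rw [div_mul_eq_mul_div, div_le_iff₀ (by positivity)]; nlinarith
    have k2 : |r| ≤ N / Real.pi := by rw [le_div_iff₀ hpi]; nlinarith
    rcases le_total 0 r with hr | hr
    · rw [abs_of_nonneg hr] at k1 k2; exact Or.inl ⟨k1, k2⟩
    · rw [abs_of_nonpos hr] at k1 k2; exact Or.inr ⟨by linarith, by linarith⟩
  refine ⟨?_, hband ?_ hξup, hband ?_ hηup⟩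
  · rw [mem_Icc, ← abs_le, le_div_iff₀ hpi]
    have e : 2 * Real.pi * w.1 - ξ ^ 3 - η ^ 3 = 2 * Real.pi * (w.1 - Phi w.2) := by
      rw [hξ, hη, Phi]; ring
    rw [e, abs_mul, abs_of_pos (by positivity : 0 < 2 * Real.pi)] at h3
    nlinarith
  · have := mul_le_mul_of_nonneg_right (min_le_right 1 c₁) hN
    calc min 1 c₁ * N ≤ c₁ * N := this
      _ ≤ c₁ * (2 * (1 + c₂) * |η|) := by gcongr
      _ = 2 * (1 + c₂) * (c₁ * |η|) := by ring
      _ ≤ 2 * (1 + c₂) * |ξ| := by gcongr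
  · have := mul_le_mul_of_nonneg_right (min_le_left 1 c₁) hN
    linarith

end Auxiliary

/-- Improved L⁴ Strichartz estimate for dyadically localized functions whose
spatial frequencies satisfy `|ξ| ∼ |η|`:
`‖u‖_{L⁴} ≤ C N^{-1/4} L^{1/2} ‖u‖_{L²}`, with `C = C(c₁,c₂)` independent of `N, L`. -/
theorem strichartz_L4_localized (c₁ c₂ : ℝ) (hc₁ : 0 < c₁) (hc : c₁ ≤ c₂) :
    ∃ C : ℝ, 0 < C ∧ ∀ N L : ℝ, (∃ n : ℤ, N = 2 ^ n) → (∃ l : ℤ, L = 2 ^ l) →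
      ∀ u : SchwartzMap (ℝ × ℝ × ℝ) ℂ,
        (∀ τ ξ η : ℝ, ftt (fun t x y => u (t, x, y)) τ ξ η ≠ 0 →
          (N / 2 ≤ Real.sqrt (ξ ^ 2 + η ^ 2) ∧ Real.sqrt (ξ ^ 2 + η ^ 2) ≤ 2 * N ∧
            L / 2 ≤ |τ - ξ ^ 3 - η ^ 3| ∧ |τ - ξ ^ 3 - η ^ 3| ≤ 2 * L ∧
            c₁ * |η| ≤ |ξ| ∧ |ξ| ≤ c₂ * |η|)) →
        l4norm3 (fun t x y => u (t, x, y)) ≤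
          ENNReal.ofReal (C * N ^ (-(1 : ℝ) / 4) * L ^ ((1 : ℝ) / 2)) *
            l2norm3 (fun t x y => u (t, x, y)) := by
  have hpi := Real.pi_pos
  have hc2 : 0 < c₂ := hc₁.trans_le hc
  have ha : 0 < min 1 c₁ / (4 * Real.pi * (1 + c₂)) :=
    div_pos (lt_min one_pos hc₁) (by positivity)
  set a := min 1 c₁ / (4 * Real.pi * (1 + c₂)) with ha_def
  refine ⟨(24 / Real.pi) ^ ((1:ℝ)/2) * a ^ (-(1:ℝ)/4), by positivity, ?_⟩
  rintro N L ⟨n, hn⟩ ⟨l, hl⟩ u hsupp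
  have hN : 0 < N := by rw [hn]; positivity
  have hL : 0 < L := by rw [hl]; positivity
  have hmb : a * N ≤ N / Real.pi := by
    have : a ≤ 1 / Real.pi := by
      rw [ha_def, div_le_div_iff₀ (by positivity) hpi]
      have h1 : min 1 c₁ ≤ 1 := min_le_left _ _
      nlinarith [mul_pos hpi hc2]
    calc a * N ≤ 1 / Real.pi * N := by gcongr
      _ = N / Real.pi := by ring
  have key := l4_of_support u (m := a * N) (b := N / Real.pi) (δ := L / Real.pi) (by positivity) hmb
    (fun w hw => by
      rw [← ftt_eq_F3 (schwartz_integrable u)] at hw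
      obtain ⟨h1, h2, -, h3, h4, h5⟩ := hsupp _ _ _ hw
      exact mem_nbhd_of_support hc₁ hc w h1 h2 h3 h4 h5)
  refine key.trans (le_of_eq ?_)
  rw [l2norm3]
  congr 1
  have e12 : (12 : ℝ≥0∞) = ENNReal.ofReal 12 := by simp
  rw [e12, ← ENNReal.ofReal_mul (by positivity), ← ENNReal.ofReal_mul (by positivity),
    ENNReal.ofReal_rpow_of_nonneg (by positivity) (by norm_num)]
  congr 1
  have e : 2 * (L / Real.pi) * ((a * N) ^ (-(1:ℝ)/2) * 12) =
      (24 / Real.pi) * L * (a * N) ^ (-(1:ℝ)/2) := by ring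
  rw [e, Real.mul_rpow (by positivity) (by positivity), Real.mul_rpow (by positivity) hL.le,
    ← Real.rpow_mul (by positivity), Real.mul_rpow ha.le hN.le]
  norm_num
  ring
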